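/- Let G be a finite Frobenius group with Frobenius kernel K and Frobenius complement H, and assume that H is not nilpotent and that every prime divisor of |H| is 2 or 3. Then G has perfect order classes if, and only if, for some positive integer k, G is isomorphic to one of: (1) C_{5^k}^2 ⋊ SL(2,3); (2) C_{5^k}^2 ⋊ (C_3 ⋊ C_8), where a generator of C_8 inverts C_3; (3) C_{7^k}^2 ⋊ (C_3 ⋊ C_{16}), where a generator of C_{16} inverts C_3; or (4) C_{17^k}^2 ⋊ (C_9 ⋊ C_{32}), where a generator of C_{32} inverts C_9 (each outer semidirect product having fixed-point-free action). -/

import Mathlib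

/-- The number of elements of order `n` in the group `G`. -/
noncomputable def orderCount (G : Type*) [Group G] (n : ℕ) : ℕ :=
  Nat.card {g : G // orderOf g = n}

/-- A group has *perfect order classes* if, for every positive integer `n`, the number of
elements of order `n` is either zero or a divisor of the order of the group. -/
def PerfectOrderClasses (G : Type*) [Group G] : Prop :=
  ∀ n : ℕ, 0 < n → orderCount G n = 0 ∨ orderCount G n ∣ Nat.card G

/-- `G` is a Frobenius group with Frobenius kernel `K` and Frobenius complement `H`:
`K` is a nontrivial proper normal subgroup, `H` a subgroup with `K ⊓ H = ⊥` and `KH = G`,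
and the conjugation action of `H` on `K` is fixed-point-free. -/
def IsFrobeniusWith {G : Type*} [Group G] (K H : Subgroup G) : Prop :=
  K ≠ ⊥ ∧ K ≠ ⊤ ∧ K.Normal ∧ K ⊓ H = ⊥ ∧
    (∀ g : G, ∃ k ∈ K, ∃ h ∈ H, g = k * h) ∧
    ∀ h ∈ H, h ≠ 1 → ∀ k ∈ K, k ≠ 1 → h * k * h⁻¹ ≠ k

/-- `G` is isomorphic to the outer semidirect product `N ⋊ C` for some
fixed-point-free action of `C` on `N` (i.e. a Frobenius semidirect product). -/
def IsoFrobSdp (G : Type*) [Group G] (N C : Type*) [Group N] [Group C] : Prop :=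
  ∃ φ : C →* MulAut N,
    (∀ h : C, h ≠ 1 → ∀ x : N, x ≠ 1 → φ h x ≠ x) ∧
      Nonempty (G ≃* SemidirectProduct N C φ)

/-- Relations of the metacyclic group `⟨a, b ∣ a^m = 1, b^n = 1, b⁻¹ a b = a^e⟩`,
with `a` the generator indexed by `true` and `b` the one indexed by `false`. -/
def metacyclicRels (m n : ℕ) (e : ℤ) : Set (FreeGroup Bool) :=
  {FreeGroup.of true ^ m, FreeGroup.of false ^ n,
    (FreeGroup.of false)⁻¹ * FreeGroup.of true * FreeGroup.of false *
      (FreeGroup.of true ^ e)⁻¹}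

/-- The metacyclic group `⟨a, b ∣ a^m = 1, b^n = 1, b⁻¹ a b = a^e⟩`. -/
abbrev Metacyclic (m n : ℕ) (e : ℤ) : Type := PresentedGroup (metacyclicRels m n e)

/-- A number all of whose prime divisors are `2` or `3`, and which is odd, is a power of `3`. -/
lemma eq_three_pow_of_odd {n : ℕ} (hn : ∀ q : ℕ, q.Prime → q ∣ n → q = 2 ∨ q = 3)
    (hodd : ¬ 2 ∣ n) : ∃ c, n = 3 ^ c := by
  have h0 : n ≠ 0 := by rintro rfl; exact hodd (dvd_zero 2)
  refine ⟨_, Nat.eq_prime_pow_of_unique_prime_dvd h0 fun {d} hd hdn => ?_⟩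
  rcases hn d hd hdn with rfl | rfl
  · exact absurd hdn hodd
  · rfl

lemma eq_two_pow_of_not_three_dvd {n : ℕ} (h0 : n ≠ 0)
    (hn : ∀ q : ℕ, q.Prime → q ∣ n → q = 2 ∨ q = 3)
    (hthree : ¬ 3 ∣ n) : ∃ c, n = 2 ^ c := by
  refine ⟨_, Nat.eq_prime_pow_of_unique_prime_dvd h0 fun {d} hd hdn => ?_⟩
  rcases hn d hd hdn with rfl | rfl
  · rfl
  · exact absurd hdn hthree

lemma not_smooth_pow_sub_one_of_odd {p t : ℕ} (hp : p.Prime) (h5 : 5 ≤ p) (ht : Odd t)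
    (ht3 : 3 ≤ t) (hs : ∀ q : ℕ, q.Prime → q ∣ p ^ t - 1 → q = 2 ∨ q = 3) : False := by
  have hpodd : Odd p := hp.odd_of_ne_two (by omega)
  have hgeom : (∑ i ∈ Finset.range t, p ^ i) * (p - 1) = p ^ t - 1 :=
    geom_sum_mul_of_one_le (by omega) t
  set s := ∑ i ∈ Finset.range t, p ^ i with hsdef
  have hsodd : ¬ 2 ∣ s := by
    have h1 : s ≡ ∑ i ∈ Finset.range t, 1 ^ i [MOD 2] := by
      rw [hsdef]
      refine Nat.ModEq.sum fun i _ => Nat.ModEq.pow i ?_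
      exact Nat.odd_iff.mp hpodd
    simp only [one_pow, Finset.sum_const, Finset.card_range, smul_eq_mul, mul_one] at h1
    have := Nat.odd_iff.mp ht
    unfold Nat.ModEq at h1
    omega
  have hs1 : 1 < s := by
    have : ∑ i ∈ Finset.range 2, p ^ i ≤ s :=
      Finset.sum_le_sum_of_subset (Finset.range_mono (by omega))
    simp [Finset.sum_range_succ] at this
    omega
  obtain ⟨c, hc⟩ := eq_three_pow_of_odd
    (fun q hq hqs => hs q hq (hgeom ▸ hqs.mul_right _)) hsodd
  have h3s : 3 ∣ s := by
    rw [hc]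
    refine dvd_pow_self 3 ?_
    rintro rfl
    simp at hc
    omega
  have hp3 : p % 3 = 1 := by
    have hne : p % 3 ≠ 0 := fun h => by
      have := (Nat.prime_dvd_prime_iff_eq Nat.prime_three hp).mp (Nat.dvd_of_mod_eq_zero h)
      omega
    by_contra h1
    have h2 : p % 3 = 2 := by omega
    obtain ⟨u, rfl⟩ := ht
    have hpow : p ^ (2 * u + 1) % 3 = 2 := by
      rw [pow_succ, pow_mul, Nat.mul_mod, Nat.pow_mod, Nat.pow_mod p 2, h2]
      norm_num
    have : 3 ∣ p ^ (2 * u + 1) - 1 := hgeom ▸ h3s.mul_right _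
    omega
  have h3t : 3 ∣ t := by
    have h1 : s ≡ ∑ i ∈ Finset.range t, 1 ^ i [MOD 3] := by
      rw [hsdef]
      exact Nat.ModEq.sum fun i _ => Nat.ModEq.pow i hp3
    simp only [one_pow, Finset.sum_const, Finset.card_range, smul_eq_mul, mul_one] at h1
    exact (h1.dvd_iff (dvd_refl 3)).mp h3s
  have hdvd : p ^ 3 - 1 ∣ p ^ t - 1 := by
    obtain ⟨u, rfl⟩ := h3t
    simpa [pow_mul] using Nat.sub_dvd_pow_sub_pow (p ^ 3) 1 u
  have hfac : p ^ 2 + p + 1 ∣ p ^ t - 1 := by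
    refine dvd_trans ⟨p - 1, ?_⟩ hdvd
    obtain ⟨w, rfl⟩ : ∃ w, p = w + 1 := ⟨p - 1, by omega⟩
    simp only [Nat.add_sub_cancel]
    rw [Nat.sub_eq_iff_eq_add (Nat.one_le_pow _ _ (by omega))]
    ring
  obtain ⟨w, rfl⟩ : ∃ w, p = 3 * w + 1 := ⟨p / 3, by omega⟩
  have hq : (3 * w + 1) ^ 2 + (3 * w + 1) + 1 = 9 * (w ^ 2 + w) + 3 := by ring
  obtain ⟨d, hd⟩ := eq_three_pow_of_odd (fun q hq hqs => hs q hq (hqs.trans hfac)) (by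
    have : Even (w ^ 2 + w) := by
      have := Nat.even_mul_succ_self w
      rwa [show w ^ 2 + w = w * (w + 1) by ring]
    obtain ⟨e, he⟩ := this
    rw [hq, he]
    omega)
  rw [hq] at hd
  have hd2 : d < 2 := by
    by_contra hcon
    have : 3 ^ 2 ∣ 3 ^ d := pow_dvd_pow 3 (by omega)
    omega
  have hw : 1 ≤ w ^ 2 := Nat.one_le_pow _ _ (by omega)
  interval_cases d <;> omega

lemma two_pow_eq_three_pow_add_one {m x : ℕ} (h : 2 ^ m = 3 ^ x + 1) : m ≤ 2 := by
  by_contra hcon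
  have h8 : 2 ^ 3 ∣ 2 ^ m := pow_dvd_pow 2 (by omega)
  have hmod : 3 ^ x % 8 = 1 ∨ 3 ^ x % 8 = 3 := by
    clear h
    induction x with
    | zero => simp
    | succ n ih =>
      rw [pow_succ]
      generalize 3 ^ n = y at ih ⊢
      omega
  omega

lemma three_pow_eq_two_pow_add_one {m x : ℕ} (h : 3 ^ x = 2 ^ m + 1) :
    x = 1 ∨ x = 2 := by
  rcases Nat.even_or_odd x with ⟨u, rfl⟩ | ⟨u, rfl⟩
  · have hu : 1 ≤ 3 ^ u := Nat.one_le_pow _ _ (by norm_num)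
    have hmul : (3 ^ u - 1) * (3 ^ u + 1) = 2 ^ m := by
      obtain ⟨v, hv⟩ : ∃ v, 3 ^ u = v + 1 := ⟨3 ^ u - 1, by omega⟩
      rw [pow_add, hv] at h
      rw [hv]
      simp only [Nat.add_sub_cancel]
      nlinarith
    obtain ⟨c, -, hc⟩ := (Nat.dvd_prime_pow Nat.prime_two).mp (hmul ▸ Dvd.intro_left _ rfl :
      3 ^ u + 1 ∣ 2 ^ m)
    have hc2 := two_pow_eq_three_pow_add_one hc.symm
    have hu0 : u ≠ 0 := by
      rintro rfl
      simp at h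
    have : 3 ^ 1 ≤ 3 ^ u := Nat.pow_le_pow_right (by norm_num) (by omega)
    have h3 : 3 ^ u ≤ 3 ^ 1 := by
      interval_cases c <;> omega
    have := (Nat.pow_le_pow_iff_right (by norm_num : 1 < 3)).mp h3
    omega
  · left
    have hmod : 3 ^ (2 * u + 1) % 8 = 3 := by
      rw [pow_succ, pow_mul, Nat.mul_mod, Nat.pow_mod]
      norm_num
    generalize hy : 3 ^ (2 * u + 1) = y at h hmod
    have hm : m ≤ 1 := by
      by_contra hcon
      rcases Nat.lt_or_ge m 3 with h3 | h3
      · have : m = 2 := by omega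
        subst this
        omega
      · have h8 : 2 ^ 3 ∣ 2 ^ m := pow_dvd_pow 2 h3
        omega
    have hle : 3 ^ (2 * u + 1) ≤ 3 ^ 1 := by
      rw [hy]
      interval_cases m <;> omega
    have := (Nat.pow_le_pow_iff_right (by norm_num : 1 < 3)).mp hle
    omega

/-- The prime powers `p ^ r`, with `p ≥ 5` and `r ≥ 2`, such that `p ^ r - 1` has no prime divisor
other than `2` and `3`. -/
lemma smooth_prime_pow_sub_one {p r : ℕ} (hp : p.Prime) (h5 : 5 ≤ p) (hr : 2 ≤ r)
    (hs : ∀ q : ℕ, q.Prime → q ∣ p ^ r - 1 → q = 2 ∨ q = 3) :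
    r = 2 ∧ (p = 5 ∨ p = 7 ∨ p = 17) := by
  have hpodd : Odd p := hp.odd_of_ne_two (by omega)
  have hp3 : p % 3 ≠ 0 := fun h => by
    have := (Nat.prime_dvd_prime_iff_eq Nat.prime_three hp).mp (Nat.dvd_of_mod_eq_zero h)
    omega
  have hr2 : r = 2 := by
    by_contra hne
    rcases Nat.even_or_odd r with ⟨t, rfl⟩ | ho
    · have hdvd : p ^ t - 1 ∣ p ^ (t + t) - 1 := by
        have := Nat.sub_dvd_pow_sub_pow (p ^ t) 1 2
        rwa [one_pow, ← pow_mul, mul_two] at this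
      rcases Nat.even_or_odd t with ⟨u, rfl⟩ | ht
      · have h4 : p ^ 2 + 1 ∣ p ^ (u + u + (u + u)) - 1 := by
          refine dvd_trans (⟨p ^ 2 - 1, ?_⟩ : p ^ 2 + 1 ∣ p ^ 4 - 1) ?_
          · rw [← Nat.sq_sub_sq]
            ring_nf
          · have := Nat.sub_dvd_pow_sub_pow (p ^ 4) 1 u
            rwa [one_pow, ← pow_mul, show 4 * u = u + u + (u + u) by ring] at this
        have hmod3 : (p ^ 2 + 1) % 3 = 2 := by
          rw [Nat.add_mod, Nat.pow_mod]
          have : p % 3 = 1 ∨ p % 3 = 2 := by omega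
          rcases this with h | h <;> rw [h] 
        obtain ⟨c, hc⟩ := eq_two_pow_of_not_three_dvd (by omega)
          (fun q hq hqs => hs q hq (hqs.trans h4)) (by omega)
        obtain ⟨w, rfl⟩ := hpodd
        have hc1 : c < 2 := by
          by_contra hcon
          have h4 : 2 ^ 2 ∣ 2 ^ c := pow_dvd_pow 2 (by omega)
          rw [← hc, show (2 * w + 1) ^ 2 + 1 = 4 * (w ^ 2 + w) + 2 by ring] at h4
          omega
        interval_cases c <;> nlinarith
      · exact not_smooth_pow_sub_one_of_odd hp h5 ht (by obtain ⟨u, rfl⟩ := ht; omega)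
          fun q hq hqs => hs q hq (hqs.trans hdvd)
    · exact not_smooth_pow_sub_one_of_odd hp h5 ho (by omega) hs
  subst hr2
  refine ⟨rfl, ?_⟩
  have hfac : p ^ 2 - 1 = (p + 1) * (p - 1) := by
    have := Nat.sq_sub_sq p 1
    simpa using this
  rw [hfac] at hs
  have hsp : ∀ q : ℕ, q.Prime → q ∣ p + 1 → q = 2 ∨ q = 3 :=
    fun q hq h => hs q hq (h.mul_right _)
  have hsm : ∀ q : ℕ, q.Prime → q ∣ p - 1 → q = 2 ∨ q = 3 :=
    fun q hq h => hs q hq (h.mul_left _)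
  obtain ⟨w, hw⟩ := hpodd
  rcases Nat.even_or_odd w with ⟨u, hu⟩ | ⟨u, hu⟩
  · obtain ⟨x, hx⟩ := eq_three_pow_of_odd (n := w + 1)
      (fun q hq h => hsp q hq (h.trans ⟨2, by omega⟩)) (by omega)
    have hx0 : x ≠ 0 := by rintro rfl; simp at hx; omega
    have h3 : 3 ∣ w + 1 := hx ▸ dvd_pow_self 3 hx0
    obtain ⟨m, hm⟩ := eq_two_pow_of_not_three_dvd (n := w) (by omega)
      (fun q hq h => hsm q hq (h.trans ⟨2, by omega⟩)) (by omega)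
    rcases three_pow_eq_two_pow_add_one (m := m) (x := x) (by omega) with rfl | rfl <;> omega
  · obtain ⟨x, hx⟩ := eq_three_pow_of_odd (n := w)
      (fun q hq h => hsm q hq (h.trans ⟨2, by omega⟩)) (by omega)
    have hx0 : x ≠ 0 := by rintro rfl; simp at hx; omega
    have h3 : 3 ∣ w := hx ▸ dvd_pow_self 3 hx0
    obtain ⟨m, hm⟩ := eq_two_pow_of_not_three_dvd (n := w + 1) (by omega)
      (fun q hq h => hsp q hq (h.trans ⟨2, by omega⟩)) (by omega)
    have := two_pow_eq_three_pow_add_one (m := m) (x := x) (by omega)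
    interval_cases m <;> omega

/-! ### Metacyclic groups -/

section Metacyclic

variable {Γ : Type*} [Group Γ]

lemma zpow_mul_eq_of_inverts {a b : Γ} (h : b⁻¹ * a * b = a⁻¹) (i : ℤ) :
    a ^ i * b = b * a ^ (-i) := by
  have h1 := conj_zpow (i := i) (a := b⁻¹) (b := a)
  rw [inv_inv, h] at h1
  rw [zpow_neg, ← inv_zpow, h1]
  group

lemma exists_zpow_mul_zpow_of_inverts {a b : Γ} (h : b⁻¹ * a * b = a⁻¹)
    (hgen : Subgroup.closure {a, b} = ⊤) (x : Γ) : ∃ j i : ℤ, x = b ^ j * a ^ i := by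
  have hx : x ∈ Subgroup.closure {a, b} := hgen ▸ Subgroup.mem_top x
  induction hx using Subgroup.closure_induction_right with
  | one => exact ⟨0, 0, by simp⟩
  | mul_right x hx y hy ih =>
    obtain ⟨j, i, rfl⟩ := ih
    rcases hy with rfl | rfl
    · exact ⟨j, i + 1, by rw [zpow_add_one, mul_assoc]⟩
    · exact ⟨j + 1, -i, by rw [mul_assoc, zpow_mul_eq_of_inverts h, zpow_add_one, mul_assoc]⟩
  | mul_inv_cancel x hx y hy ih =>
    obtain ⟨j, i, rfl⟩ := ih
    rcases hy with rfl | rfl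
    · exact ⟨j, i - 1, by rw [zpow_sub_one, mul_assoc]⟩
    · refine ⟨j - 1, -i, ?_⟩
      rw [eq_comm, zpow_sub_one, mul_assoc, mul_assoc, mul_right_inj, inv_mul_eq_iff_eq_mul,
        ← mul_assoc, eq_mul_inv_iff_mul_eq, zpow_mul_eq_of_inverts h, neg_neg]

lemma finite_and_card_le_of_inverts {a b : Γ} {m n : ℕ} (hm : 0 < m) (hn : 0 < n)
    (ha : a ^ m = 1) (hb : b ^ n = 1) (h : b⁻¹ * a * b = a⁻¹)
    (hgen : Subgroup.closure {a, b} = ⊤) : Finite Γ ∧ Nat.card Γ ≤ m * n := by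
  have hfa : IsOfFinOrder a := isOfFinOrder_iff_pow_eq_one.mpr ⟨m, hm, ha⟩
  have hfb : IsOfFinOrder b := isOfFinOrder_iff_pow_eq_one.mpr ⟨n, hn, hb⟩
  have : Finite (Subgroup.zpowers a) := hfa.finite_zpowers
  have : Finite (Subgroup.zpowers b) := hfb.finite_zpowers
  let f : Subgroup.zpowers b × Subgroup.zpowers a → Γ := fun x => x.1 * x.2
  have hf : Function.Surjective f := fun x => by
    obtain ⟨j, i, rfl⟩ := exists_zpow_mul_zpow_of_inverts h hgen x
    exact ⟨⟨⟨b ^ j, j, rfl⟩, ⟨a ^ i, i, rfl⟩⟩, rfl⟩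
  refine ⟨Finite.of_surjective f hf, (Nat.card_le_card_of_surjective f hf).trans ?_⟩
  rw [Nat.card_prod, Nat.card_zpowers, Nat.card_zpowers, mul_comm]
  exact Nat.mul_le_mul (orderOf_le_of_pow_eq_one hm ha) (orderOf_le_of_pow_eq_one hn hb)

namespace Metacyclic

/-- The first generator of a metacyclic group. -/
def genA (m n : ℕ) (e : ℤ) : Metacyclic m n e := PresentedGroup.of true

/-- The second generator of a metacyclic group. -/
def genB (m n : ℕ) (e : ℤ) : Metacyclic m n e := PresentedGroup.of false

variable {m n : ℕ} {e : ℤ}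

lemma genA_pow : genA m n e ^ m = 1 :=
  PresentedGroup.one_of_mem (rels := metacyclicRels m n e) (x := FreeGroup.of true ^ m)
    (by simp [metacyclicRels])

lemma genB_pow : genB m n e ^ n = 1 :=
  PresentedGroup.one_of_mem (rels := metacyclicRels m n e) (x := FreeGroup.of false ^ n)
    (by simp [metacyclicRels])

lemma genB_conj_genA : (genB m n e)⁻¹ * genA m n e * genB m n e = genA m n e ^ e :=
  mul_inv_eq_one.mp <| PresentedGroup.one_of_mem (rels := metacyclicRels m n e)
    (x := (FreeGroup.of false)⁻¹ * FreeGroup.of true * FreeGroup.of false *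
      (FreeGroup.of true ^ e)⁻¹)
    (by simp [metacyclicRels])

lemma closure_gens : Subgroup.closure {genA m n e, genB m n e} = ⊤ := by
  rw [← PresentedGroup.closure_range_of (metacyclicRels m n e)]
  congr 1
  ext x
  simp [genA, genB, or_comm]

/-- The homomorphism out of a metacyclic group given by two elements satisfying its relations. -/
def lift (a b : Γ) (ha : a ^ m = 1) (hb : b ^ n = 1) (h : b⁻¹ * a * b = a ^ e) :
    Metacyclic m n e →* Γ :=
  PresentedGroup.toGroup (f := fun t => bif t then a else b) (by
    rintro r (rfl | rfl | rfl)
    · simp [ha]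
    · simp [hb]
    · simp [h])

lemma lift_genA {a b : Γ} (ha : a ^ m = 1) (hb : b ^ n = 1) (h : b⁻¹ * a * b = a ^ e) :
    lift a b ha hb h (genA m n e) = a := by
  simp [lift, genA]

lemma lift_genB {a b : Γ} (ha : a ^ m = 1) (hb : b ^ n = 1) (h : b⁻¹ * a * b = a ^ e) :
    lift a b ha hb h (genB m n e) = b := by
  simp [lift, genB]

lemma genB_conj_genA_inv :
    (genB m n (-1))⁻¹ * genA m n (-1) * genB m n (-1) = (genA m n (-1))⁻¹ := by
  rw [genB_conj_genA, zpow_neg_one]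

lemma finite_and_card_le (hm : 0 < m) (hn : 0 < n) :
    Finite (Metacyclic m n (-1)) ∧ Nat.card (Metacyclic m n (-1)) ≤ m * n :=
  finite_and_card_le_of_inverts hm hn genA_pow genB_pow genB_conj_genA_inv closure_gens

lemma orderOf_gens (hn : Even n) :
    orderOf (genA m n (-1)) = m ∧ orderOf (genB m n (-1)) = n := by
  let a : DihedralGroup m × Multiplicative (ZMod n) := (DihedralGroup.r 1, 1)
  let b : DihedralGroup m × Multiplicative (ZMod n) :=
    (DihedralGroup.sr 0, Multiplicative.ofAdd 1)
  have ha : a ^ m = 1 := by simp [a, Prod.pow_mk, Prod.mk_eq_one]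
  have hb : b ^ n = 1 := by
    obtain ⟨k, rfl⟩ := hn
    simp only [b, Prod.pow_mk, Prod.mk_eq_one]
    refine ⟨?_, ?_⟩
    · rw [← two_mul, pow_mul, DihedralGroup.sr_mul_self 0 |> (sq _).trans, one_pow]
    · rw [← ofAdd_nsmul, nsmul_one, ZMod.natCast_self, ofAdd_zero]
  have hab : b⁻¹ * a * b = a ^ (-1 : ℤ) := by
    ext <;> simp [a, b]
  constructor
  · refine Nat.dvd_antisymm (orderOf_dvd_of_pow_eq_one genA_pow) ?_
    have := orderOf_map_dvd (lift a b ha hb hab) (genA m n (-1))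
    rw [lift_genA] at this
    refine dvd_trans ?_ this
    rw [Prod.orderOf_mk, DihedralGroup.orderOf_r_one]
    exact Nat.dvd_lcm_left _ _
  · refine Nat.dvd_antisymm (orderOf_dvd_of_pow_eq_one genB_pow) ?_
    have := orderOf_map_dvd (lift a b ha hb hab) (genB m n (-1))
    rw [lift_genB] at this
    refine dvd_trans ?_ this
    rw [Prod.orderOf_mk, orderOf_ofAdd_eq_addOrderOf, ZMod.addOrderOf_one]
    exact Nat.dvd_lcm_right _ _

lemma card_eq (hm : 0 < m) (hn : 0 < n) (heven : Even n) (hmn : m.Coprime n) :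
    Nat.card (Metacyclic m n (-1)) = m * n := by
  obtain ⟨hfin, hle⟩ := finite_and_card_le hm hn
  obtain ⟨hA, hB⟩ := orderOf_gens (m := m) heven
  refine le_antisymm hle (Nat.le_of_dvd Nat.card_pos ?_)
  refine hmn.mul_dvd_of_dvd_of_dvd ?_ ?_
  · simpa only [hA] using orderOf_dvd_natCard (genA m n (-1))
  · simpa only [hB] using orderOf_dvd_natCard (genB m n (-1))

lemma nonempty_mulEquiv [Finite Γ] (hm : 0 < m) (hn : 0 < n) {a b : Γ} (ha : a ^ m = 1)
    (hb : b ^ n = 1) (h : b⁻¹ * a * b = a⁻¹) (hgen : Subgroup.closure {a, b} = ⊤)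
    (hcard : Nat.card Γ = m * n) : Nonempty (Γ ≃* Metacyclic m n (-1)) := by
  obtain ⟨hfin, hle⟩ := finite_and_card_le hm hn
  let f := lift (e := -1) a b ha hb (by rw [h, zpow_neg_one])
  have hf : Function.Surjective f := by
    rw [← MonoidHom.range_eq_top, ← top_le_iff, ← hgen, Subgroup.closure_le]
    rintro x (rfl | rfl)
    · exact ⟨_, lift_genA ..⟩
    · exact ⟨_, lift_genB ..⟩
  have hcard' : Nat.card (Metacyclic m n (-1)) = Nat.card Γ :=
    le_antisymm (hle.trans hcard.ge) (Nat.card_le_card_of_surjective f hf)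
  exact ⟨(MulEquiv.ofBijective f
    ((Nat.bijective_iff_surjective_and_card f).mpr ⟨hf, hcard'⟩)).symm⟩

end Metacyclic

lemma orderCount_eq_add [Finite Γ] (A : Subgroup Γ) (d : ℕ) :
    orderCount Γ d = orderCount A d + Nat.card {x : Γ // x ∉ A ∧ orderOf x = d} := by
  classical
  have h1 : orderCount A d = Nat.card {x : Γ // x ∈ A ∧ orderOf x = d} := by
    refine Nat.card_congr ⟨fun x => ⟨x.1, x.1.2, (Subgroup.orderOf_coe x.1).trans x.2⟩,
      fun x => ⟨⟨x.1, x.2.1⟩, (Subgroup.orderOf_mk x.1 x.2.1).trans x.2.2⟩,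
      fun x => rfl, fun x => rfl⟩
  rw [h1, ← Nat.card_sum]
  refine Nat.card_congr (Equiv.trans (Equiv.subtypeEquivRight fun x => ?_)
    (subtypeOrEquiv _ _ (disjoint_iff_inf_le.mpr fun x hx => hx.2.1 hx.1.1)))
  tauto

lemma orderCount_eq_zero [Finite Γ] {d : ℕ} (h : ¬ d ∣ Nat.card Γ) : orderCount Γ d = 0 := by
  have : IsEmpty {g : Γ // orderOf g = d} := ⟨fun x => h (x.2 ▸ orderOf_dvd_natCard x.1)⟩
  exact Nat.card_of_isEmpty

lemma orderCount_of_isCyclic [Finite Γ] [IsCyclic Γ] {d : ℕ} (h : d ∣ Nat.card Γ) :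
    orderCount Γ d = d.totient := by
  have := Fintype.ofFinite Γ
  rw [Nat.card_eq_fintype_card] at h
  rw [← IsCyclic.card_orderOf_eq_totient h, orderCount, Nat.card_eq_fintype_card,
    Fintype.card_subtype]

lemma perfectOrderClasses_of_cyclic_index_two [Finite Γ] (A : Subgroup Γ) [IsCyclic A]
    (hA : Nat.card Γ = 2 * Nat.card A) {n : ℕ} (hn : ∀ x ∉ A, orderOf x = n)
    (hnA : ¬ n ∣ Nat.card A) (hφ : ∀ d, d ∣ Nat.card A → d.totient ∣ Nat.card Γ) :
    PerfectOrderClasses Γ := by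
  intro d _
  rw [orderCount_eq_add A d]
  by_cases hd : d ∣ Nat.card A
  · right
    have : IsEmpty {x : Γ // x ∉ A ∧ orderOf x = d} :=
      ⟨fun x => hnA (((hn x.1 x.2.1).symm.trans x.2.2) ▸ hd)⟩
    rw [orderCount_of_isCyclic hd, Nat.card_of_isEmpty (α := {x : Γ // x ∉ A ∧ orderOf x = d})]
    exact hφ d hd
  · rw [orderCount_eq_zero hd, zero_add]
    by_cases hdn : d = n
    · right
      have h1 : Nat.card {x : Γ // x ∉ A ∧ orderOf x = d} = Nat.card {x : Γ // x ∉ A} :=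
        Nat.card_congr (Equiv.subtypeEquivRight fun x =>
          ⟨fun h => h.1, fun h => ⟨h, (hn x h).trans hdn.symm⟩⟩)
      have h2 : Nat.card Γ = Nat.card A + Nat.card {x : Γ // x ∉ A} := by
        classical
        rw [← Nat.card_sum]
        exact Nat.card_congr (Equiv.sumCompl (· ∈ A)).symm
      exact ⟨2, by omega⟩
    · left
      have : IsEmpty {x : Γ // x ∉ A ∧ orderOf x = d} :=
        ⟨fun x => hdn (hn x.1 x.2.1 ▸ x.2.2.symm)⟩
      exact Nat.card_of_isEmpty

lemma Metacyclic.perfectOrderClasses {m k : ℕ} (hm : Odd m) (hk : 2 ≤ k)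
    (hφ : ∀ d, d ∣ m * 2 ^ (k - 1) → d.totient ∣ m * 2 ^ k) :
    PerfectOrderClasses (Metacyclic m (2 ^ k) (-1)) := by
  have heven : Even (2 ^ k) := (Nat.even_pow.mpr ⟨even_two, by omega⟩)
  have hm0 : 0 < m := hm.pos
  have hn0 : 0 < 2 ^ k := by positivity
  have hcop : ∀ l, m.Coprime (2 ^ l) := fun l => (Nat.coprime_two_right.mpr hm).pow_right l
  obtain ⟨hfin, -⟩ := Metacyclic.finite_and_card_le (m := m) hm0 hn0
  have hcard := Metacyclic.card_eq hm0 hn0 heven (hcop k)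
  obtain ⟨hA, hB⟩ := Metacyclic.orderOf_gens (m := m) heven
  have hconj := Metacyclic.genB_conj_genA_inv (m := m) (n := 2 ^ k)
  have hclos := Metacyclic.closure_gens (m := m) (n := 2 ^ k) (e := -1)
  set a := Metacyclic.genA m (2 ^ k) (-1)
  set b := Metacyclic.genB m (2 ^ k) (-1)
  have hk2 : 2 ^ k = 2 * 2 ^ (k - 1) := by rw [← pow_succ']; congr 1; omega
  have hb2 : orderOf (b ^ 2) = 2 ^ (k - 1) := by
    rw [orderOf_pow_of_dvd two_ne_zero (by rw [hB, hk2]; exact dvd_mul_right 2 _), hB, hk2]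
    simp
  have hcomm : Commute a (b ^ 2) := by
    have h1 := zpow_mul_eq_of_inverts hconj 1
    have h2 := zpow_mul_eq_of_inverts hconj (-1)
    rw [neg_neg] at h2
    simp only [zpow_one] at h1 h2
    change a * b ^ 2 = b ^ 2 * a
    rw [sq, ← mul_assoc, h1, mul_assoc, h2, mul_assoc]
  have hc : orderOf (a * b ^ 2) = m * 2 ^ (k - 1) := by
    rw [hcomm.orderOf_mul_eq_mul_orderOf_of_coprime (by rw [hA, hb2]; exact hcop _), hA, hb2]
  have hcA : Nat.card (Subgroup.zpowers (a * b ^ 2)) = m * 2 ^ (k - 1) := by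
    rw [Nat.card_zpowers, hc]
  have hab : a ∈ Subgroup.zpowers (a * b ^ 2) ∧ b ^ 2 ∈ Subgroup.zpowers (a * b ^ 2) := by
    have h1 : a ^ (2 ^ (k - 1)) ∈ Subgroup.zpowers (a * b ^ 2) := by
      refine ⟨(2 ^ (k - 1) : ℕ), ?_⟩
      simp only [zpow_natCast]
      rw [hcomm.mul_pow, ← hb2, pow_orderOf_eq_one, mul_one]
    have hmem : a ∈ Subgroup.zpowers (a * b ^ 2) := by
      have h2 : a ∈ Subgroup.zpowers (a ^ (2 ^ (k - 1))) := by
        rw [mem_zpowers_pow_iff]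
        rw [hA]
        exact (hcop _).symm
      exact (Subgroup.zpowers_le.mpr h1) h2
    exact ⟨hmem, (Subgroup.mul_mem_cancel_left _ hmem).mp (Subgroup.mem_zpowers _)⟩
  refine perfectOrderClasses_of_cyclic_index_two (Subgroup.zpowers (a * b ^ 2)) (n := 2 ^ k)
    ?_ ?_ ?_ ?_
  · rw [hcard, hcA, hk2]; ring
  · intro x hx
    obtain ⟨j, i, rfl⟩ := exists_zpow_mul_zpow_of_inverts hconj hclos x
    rcases Int.even_or_odd j with ⟨l, rfl⟩ | ⟨l, rfl⟩
    · refine absurd (Subgroup.mul_mem _ ?_ (Subgroup.zpow_mem _ hab.1 i)) hx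
      rw [← two_mul, zpow_mul]
      exact Subgroup.zpow_mem _ (by exact_mod_cast hab.2) l
    · have hsq : (b ^ (2 * l + 1) * a ^ i) ^ 2 = (b ^ 2) ^ (2 * l + 1) := by
        have h1 : a ^ i * b ^ (2 * l + 1) = b ^ (2 * l + 1) * a ^ (-i) := by
          have hc2 : Commute (a ^ i) ((b ^ 2) ^ l) := (hcomm.zpow_left i).zpow_right l
          have e1 : b ^ (2 * l + 1) = (b ^ 2) ^ l * b := by
            rw [zpow_add_one, zpow_mul]; norm_cast
          rw [e1, ← mul_assoc, hc2.eq, mul_assoc, zpow_mul_eq_of_inverts hconj, mul_assoc]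
        rw [sq, mul_assoc, ← mul_assoc (a ^ i), h1, mul_assoc, ← zpow_add, neg_add_cancel,
          zpow_zero, mul_one, ← zpow_add, ← zpow_natCast b 2, ← zpow_mul]
        congr 1
        push_cast
        ring
      have ho : orderOf ((b ^ (2 * l + 1) * a ^ i) ^ 2) = 2 ^ (k - 1) := by
        rw [hsq, ← hb2]
        refine Nat.dvd_antisymm (orderOf_dvd_of_mem_zpowers ⟨_, rfl⟩) ?_
        have h2 : b ^ 2 ∈ Subgroup.zpowers ((b ^ 2) ^ (2 * l + 1)) := by
          refine (mem_zpowers_zpow_iff).mpr ?_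
          rw [hb2]
          rw [← Int.isCoprime_iff_gcd_eq_one]
          push_cast
          exact IsCoprime.pow_right ⟨1, -l, by ring⟩
        exact orderOf_dvd_of_mem_zpowers h2
      have h4 : 2 ^ (k - 1) = 2 * 2 ^ (k - 2) := by rw [← pow_succ']; congr 1; omega
      rcases Nat.even_or_odd (orderOf (b ^ (2 * l + 1) * a ^ i)) with he | he
      · rw [orderOf_pow_of_dvd two_ne_zero he.two_dvd] at ho
        obtain ⟨r, hr⟩ := he
        omega
      · rw [Nat.Coprime.orderOf_pow (Nat.coprime_two_right.mpr he)] at ho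
        rw [ho, h4] at he
        exact absurd he (by simp)
  · rw [hcA, hk2]
    intro h
    have := Nat.dvd_of_mul_dvd_mul_right (by positivity) h
    exact hm.not_two_dvd_nat this
  · rw [hcA, hcard]; exact hφ

end Metacyclic

/-! ### The group `SL(2, 3)` -/

section SLTwoThree

lemma finite_and_card_le_of_quaternion_relations {Γ : Type*} [Group Γ] {i j a : Γ} (hi : i ^ 4 = 1)
    (hj : j ^ 2 = i ^ 2) (hji : j * i = i⁻¹ * j)
    (hai : a * i = j * a) (haj : a * j = i * j * a)
    (ha : a ^ 3 = 1) (hgen : Subgroup.closure {i, a} = ⊤) :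
    Finite Γ ∧ Nat.card Γ ≤ 24 := by
  have : Finite (Subgroup.zpowers i) :=
    (isOfFinOrder_iff_pow_eq_one.mpr ⟨4, by norm_num, hi⟩).finite_zpowers
  have : Finite (Subgroup.zpowers a) :=
    (isOfFinOrder_iff_pow_eq_one.mpr ⟨3, by norm_num, ha⟩).finite_zpowers
  let f : Subgroup.zpowers i × Bool × Subgroup.zpowers a → Γ :=
    fun x => x.1 * (bif x.2.1 then j else 1) * x.2.2
  have hmem : ∀ (u : ℤ) (t : Bool) (v : ℤ), i ^ u * (bif t then j else 1) * a ^ v ∈ Set.range f :=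
    fun u t v => ⟨⟨⟨i ^ u, u, rfl⟩, t, ⟨a ^ v, v, rfl⟩⟩, rfl⟩
  have hjeven : ∀ q : ℤ, j ^ (2 * q) = i ^ (2 * q) := fun q => by
    rw [zpow_mul, zpow_mul]
    exact congrArg (· ^ q) (by exact_mod_cast hj)
  have haconj : ∀ u : ℤ, a * i ^ u = j ^ u * a := fun u => by
    have h1 : a * i * a⁻¹ = j := by rw [hai, mul_inv_cancel_right]
    rw [← h1, conj_zpow, inv_mul_cancel_right]
  have hstep : ∀ x ∈ Set.range f, a * x ∈ Set.range f := by
    rintro _ ⟨⟨⟨_, u, rfl⟩, t, ⟨_, v, rfl⟩⟩, rfl⟩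
    have hfx : f ⟨⟨i ^ u, u, rfl⟩, t, ⟨a ^ v, v, rfl⟩⟩ =
      i ^ u * (bif t then j else 1) * a ^ v := rfl
    change a * f ⟨⟨i ^ u, u, rfl⟩, t, ⟨a ^ v, v, rfl⟩⟩ ∈ Set.range f
    rw [hfx, ← mul_assoc, ← mul_assoc, haconj]
    rcases Int.even_or_odd' u with ⟨q, rfl | rfl⟩ <;> cases t
    · convert hmem (2 * q) false (v + 1) using 1
      simp only [cond_false, mul_one, hjeven, mul_assoc, zpow_add, zpow_one, mul_right_inj]
      exact (Commute.refl a).zpow_right v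
    · convert hmem (2 * q + 1) true (v + 1) using 1
      simp only [cond_true, mul_assoc, hjeven, zpow_add, zpow_one, mul_right_inj]
      rw [← mul_assoc a j, haj, mul_assoc, mul_assoc, (Commute.refl a).zpow_right v]
    · convert hmem (2 * q) true (v + 1) using 1
      simp only [cond_true, cond_false, mul_one, zpow_add, zpow_one, hjeven, mul_assoc,
        mul_right_inj]
      exact (Commute.refl a).zpow_right v
    · convert hmem (2 * q + 1) false (v + 1) using 1
      simp only [cond_true, cond_false, mul_one, zpow_add, zpow_one, hjeven, mul_assoc,
        mul_right_inj]
      rw [← mul_assoc a j, haj, mul_assoc, mul_assoc, ← mul_assoc j i, hji, mul_assoc,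
        ← mul_assoc j j, ← sq, hj, ← mul_assoc, sq, inv_mul_cancel_left,
        (Commute.refl a).zpow_right v]
  have hf : Function.Surjective f := fun x => by
    have hx : x ∈ Subgroup.closure {i, a} := hgen ▸ Subgroup.mem_top x
    change x ∈ Set.range f
    induction hx using Subgroup.closure_induction_left with
    | one => simpa using hmem 0 false 0
    | mul_left x hx y hy ih =>
      rcases hx with rfl | rfl
      · obtain ⟨⟨⟨_, u, rfl⟩, t, ⟨_, v, rfl⟩⟩, rfl⟩ := ih
        convert hmem (u + 1) t v using 1
        simp only [f, add_comm u 1, zpow_one_add, mul_assoc]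
      · exact hstep _ ih
    | inv_mul_cancel x hx y hy ih =>
      rcases hx with rfl | rfl
      · obtain ⟨⟨⟨_, u, rfl⟩, t, ⟨_, v, rfl⟩⟩, rfl⟩ := ih
        convert hmem (-1 + u) t v using 1
        simp only [f, zpow_add, zpow_neg_one, mul_assoc]
      · have : x⁻¹ = x * x := inv_eq_of_mul_eq_one_right (by rw [← ha, pow_succ, sq, mul_assoc])
        rw [this, mul_assoc]
        exact hstep _ (hstep _ ih)
  refine ⟨Finite.of_surjective f hf, (Nat.card_le_card_of_surjective f hf).trans ?_⟩
  rw [Nat.card_prod, Nat.card_prod, Nat.card_zpowers, Nat.card_zpowers, Nat.card_eq_fintype_card,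
    Fintype.card_bool]
  have h1 := orderOf_le_of_pow_eq_one (by norm_num) hi
  have h2 := orderOf_le_of_pow_eq_one (by norm_num) ha
  calc orderOf i * (2 * orderOf a) ≤ 4 * (2 * 3) := by gcongr
    _ = 24 := rfl

lemma nonempty_mulEquiv_of_subgroup_prod {A B : Type*} [Group A] [Group B] [Finite A] [Finite B]
    (T : Subgroup (A × B)) (hA : Nat.card T ≤ Nat.card A) (hB : Nat.card T ≤ Nat.card B)
    (hfst : T.map (MonoidHom.fst A B) = ⊤) (hsnd : T.map (MonoidHom.snd A B) = ⊤) :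
    Nonempty (A ≃* B) := by
  let f : T →* A := (MonoidHom.fst A B).comp T.subtype
  let g : T →* B := (MonoidHom.snd A B).comp T.subtype
  have hf : Function.Surjective f := by
    rw [← MonoidHom.range_eq_top, MonoidHom.range_comp, Subgroup.range_subtype, hfst]
  have hg : Function.Surjective g := by
    rw [← MonoidHom.range_eq_top, MonoidHom.range_comp, Subgroup.range_subtype, hsnd]
  have hf' : Function.Bijective f := (Nat.bijective_iff_surjective_and_card f).mpr
    ⟨hf, le_antisymm hA (Nat.card_le_card_of_surjective f hf)⟩
  have hg' : Function.Bijective g := (Nat.bijective_iff_surjective_and_card g).mpr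
    ⟨hg, le_antisymm hB (Nat.card_le_card_of_surjective g hg)⟩
  exact ⟨(MulEquiv.ofBijective f hf').symm.trans (MulEquiv.ofBijective g hg')⟩

namespace SLTwoThree

open Matrix

lemma card_eq : Nat.card (SpecialLinearGroup (Fin 2) (ZMod 3)) = 24 := by
  rw [Nat.card_eq_fintype_card]
  decide +kernel

/-- An element of order `4` of `SL(2, 3)`. -/
def quarter : SpecialLinearGroup (Fin 2) (ZMod 3) := ⟨!![0, -1; 1, 0], by decide +kernel⟩

/-- An element of order `3` of `SL(2, 3)`. -/
def shear : SpecialLinearGroup (Fin 2) (ZMod 3) := ⟨!![1, 1; 0, 1], by decide +kernel⟩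

/-- The conjugate of `quarter` by `shear`. -/
def quarter' : SpecialLinearGroup (Fin 2) (ZMod 3) := shear * quarter * shear ^ 2

lemma relations : quarter ^ 4 = 1 ∧ quarter' ^ 2 = quarter ^ 2 ∧
    quarter' * quarter = quarter⁻¹ * quarter' ∧ shear * quarter = quarter' * shear ∧
    shear * quarter' = quarter * quarter' * shear ∧ shear ^ 3 = 1 := by
  decide +kernel

lemma closure_gens : Subgroup.closure {quarter, shear} = ⊤ := by
  rw [eq_top_iff]
  rintro x -
  have key : ∀ x : SpecialLinearGroup (Fin 2) (ZMod 3), ∃ u : Fin 4, ∃ t : Fin 2, ∃ v : Fin 3,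
      x = quarter ^ (u : ℕ) * (shear * quarter * shear ^ 2) ^ (t : ℕ) * shear ^ (v : ℕ) := by
    decide +kernel
  obtain ⟨u, t, v, rfl⟩ := key x
  have h1 : quarter ∈ Subgroup.closure {quarter, shear} := Subgroup.subset_closure (by simp)
  have h2 : shear ∈ Subgroup.closure {quarter, shear} := Subgroup.subset_closure (by simp)
  exact mul_mem (mul_mem (pow_mem h1 _)
    (pow_mem (mul_mem (mul_mem h2 h1) (pow_mem h2 _)) _)) (pow_mem h2 _)

lemma nonempty_mulEquiv {Γ : Type*} [Group Γ] [Finite Γ] (hcard : Nat.card Γ = 24) {i j a : Γ}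
    (hi : i ^ 4 = 1) (hj : j ^ 2 = i ^ 2) (hji : j * i = i⁻¹ * j)
    (hai : a * i = j * a) (haj : a * j = i * j * a)
    (ha : a ^ 3 = 1) (hgen : Subgroup.closure {i, a} = ⊤) :
    Nonempty (Γ ≃* SpecialLinearGroup (Fin 2) (ZMod 3)) := by
  obtain ⟨h₁, h₂, h₃, h₄, h₅, h₆⟩ := relations
  let T : Subgroup (Γ × SpecialLinearGroup (Fin 2) (ZMod 3)) :=
    Subgroup.closure {(i, quarter), (a, shear)}
  have hiT : (i, quarter) ∈ T := Subgroup.subset_closure (by simp)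
  have haT : (a, shear) ∈ T := Subgroup.subset_closure (by simp)
  have hjT : (j, quarter') ∈ T := by
    have : (j, quarter') = (a, shear) * (i, quarter) * (a, shear) ^ 2 := by
      refine Prod.ext ?_ rfl
      change j = a * i * a ^ 2
      rw [hai, mul_assoc, ← pow_succ', ha, mul_one]
    rw [this]
    exact mul_mem (mul_mem haT hiT) (pow_mem haT 2)
  obtain ⟨hfin, hle⟩ := finite_and_card_le_of_quaternion_relations (Γ := T)
    (i := ⟨_, hiT⟩) (j := ⟨_, hjT⟩) (a := ⟨_, haT⟩)
    (Subtype.ext (Prod.ext hi h₁))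
    (Subtype.ext (Prod.ext hj h₂))
    (Subtype.ext (Prod.ext hji h₃))
    (Subtype.ext (Prod.ext hai h₄))
    (Subtype.ext (Prod.ext haj h₅))
    (Subtype.ext (Prod.ext ha h₆))
    (by
      have := Subgroup.closure_closure_coe_preimage
        (k := {((i, quarter) : Γ × SpecialLinearGroup (Fin 2) (ZMod 3)), (a, shear)})
      rw [← this]
      congr 1
      ext x
      simp [Subtype.ext_iff])
  refine nonempty_mulEquiv_of_subgroup_prod T (by rw [hcard]; exact hle)
    (by rw [card_eq]; exact hle) ?_ ?_
  · rw [MonoidHom.map_closure, Set.image_pair]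
    exact hgen
  · rw [MonoidHom.map_closure, Set.image_pair]
    exact closure_gens

lemma perfectOrderClasses : PerfectOrderClasses (SpecialLinearGroup (Fin 2) (ZMod 3)) := by
  intro n hn
  have hexp : ∀ g : SpecialLinearGroup (Fin 2) (ZMod 3), g ^ 12 = 1 := by decide +kernel
  by_cases hn12 : n ∣ 12
  · have key : ∀ n ∈ Nat.divisors 12, ∃ c ∈ ({0, 1, 6, 8} : Finset ℕ), (Finset.univ.filter
        fun g : SpecialLinearGroup (Fin 2) (ZMod 3) =>
          g ^ n = 1 ∧ ∀ m, m < n → 0 < m → g ^ m ≠ 1).card = c := by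
      decide +kernel
    rw [card_eq, orderCount, Nat.card_congr (Equiv.subtypeEquivRight fun g =>
      orderOf_eq_iff (x := g) hn), Nat.card_eq_fintype_card, Fintype.card_subtype]
    obtain ⟨c, hc, hcard⟩ := key n (by simpa using hn12)
    rw [hcard]
    clear hcard
    revert c
    decide
  · left
    have : IsEmpty {g : SpecialLinearGroup (Fin 2) (ZMod 3) // orderOf g = n} :=
      ⟨fun g => hn12 (g.2 ▸ orderOf_dvd_of_pow_eq_one (hexp g.1))⟩
    exact Nat.card_of_isEmpty

end SLTwoThree

end SLTwoThree

/-! ### Groups with a unique involution -/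

section UniqueInvolution

variable {Γ : Type*} [Group Γ] {z : Γ}

lemma zpow_eq_zpow_iff_intCast_eq {y : Γ} {N : ℕ} (hy : orderOf y = N) (u v : ℤ) :
    y ^ u = y ^ v ↔ (u : ZMod N) = v := by
  rw [zpow_eq_zpow_iff_modEq, hy, ZMod.intCast_eq_intCast_iff]

/-- `z` is the only involution of the group. -/
def IsUniqueInvolution (z : Γ) : Prop := z ≠ 1 ∧ ∀ x : Γ, x ^ 2 = 1 ↔ x = 1 ∨ x = z

namespace IsUniqueInvolution

lemma sq (hz : IsUniqueInvolution z) : z ^ 2 = 1 := (hz.2 z).mpr (Or.inr rfl)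

lemma mul_self (hz : IsUniqueInvolution z) : z * z = 1 := by rw [← pow_two, hz.sq]

lemma orderOf_eq (hz : IsUniqueInvolution z) : orderOf z = 2 := orderOf_eq_prime hz.sq hz.1

lemma commute (hz : IsUniqueInvolution z) (x : Γ) : Commute x z := by
  have h : (x * z * x⁻¹) ^ 2 = 1 := by rw [conj_pow, hz.sq, mul_one, mul_inv_cancel]
  rcases (hz.2 _).mp h with h | h
  · exact absurd (conj_eq_one_iff.mp h) hz.1
  · exact mul_inv_eq_iff_eq_mul.mp h

lemma mem_zpowers (hz : IsUniqueInvolution z) {y : Γ} {n : ℕ} (hy : orderOf y = 2 * n)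
    (hn : n ≠ 0) : y ^ n = z := by
  have h : (y ^ n) ^ 2 = 1 := by rw [← pow_mul, mul_comm, ← hy, pow_orderOf_eq_one]
  refine ((hz.2 _).mp h).resolve_left fun h1 => ?_
  have := Nat.le_of_dvd (Nat.pos_of_ne_zero hn) (orderOf_dvd_of_pow_eq_one h1)
  omega

lemma subgroup (hz : IsUniqueInvolution z) {Q : Subgroup Γ} (hQ : z ∈ Q) :
    IsUniqueInvolution (⟨z, hQ⟩ : Q) := by
  refine ⟨fun h => hz.1 (congrArg Subtype.val h), fun x => ?_⟩
  have := hz.2 x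
  simp only [Subtype.ext_iff, Subgroup.coe_pow, Subgroup.coe_one]
  exact this

lemma mem_of_even_card (hz : IsUniqueInvolution z) [Finite Γ] {Q : Subgroup Γ}
    (hQ : 2 ∣ Nat.card Q) : z ∈ Q := by
  have : Fact (Nat.Prime 2) := ⟨Nat.prime_two⟩
  obtain ⟨x, hx⟩ := exists_prime_orderOf_dvd_card' 2 hQ
  have h1 : orderOf (x : Γ) = 2 * 1 := by rw [Subgroup.orderOf_coe, hx]
  have := hz.mem_zpowers h1 one_ne_zero
  rw [pow_one] at this
  exact this ▸ x.2

lemma orderOf_eq_four_iff (hz : IsUniqueInvolution z) {x : Γ} :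
    orderOf x = 4 ↔ x ^ 2 = z := by
  constructor
  · intro h
    exact hz.mem_zpowers (n := 2) h two_ne_zero
  · intro h
    refine orderOf_eq_prime_pow (p := 2) (n := 1) ?_ ?_
    · rw [pow_one, h]; exact hz.1
    · change x ^ (2 * 2) = 1
      rw [pow_mul, h, hz.sq]

/-- The number of elements of order `4` is `2` modulo `4`. -/
lemma orderCount_four_mod (hz : IsUniqueInvolution z) [Finite Γ] (h4 : 4 ∣ Nat.card Γ) :
    orderCount Γ 4 % 4 = 2 := by
  classical
  have := Fintype.ofFinite Γ
  set S : Finset Γ := Finset.univ.filter (fun x => x ^ 4 ≠ 1) with hS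
  let F : Γ → Finset Γ := fun x => {x, x⁻¹, z * x, z * x⁻¹}
  have hzi : z⁻¹ = z := inv_eq_of_mul_eq_one_right hz.mul_self
  have hzz : ∀ x, z * (z * x) = x := fun x => by rw [← mul_assoc, hz.mul_self, one_mul]
  have hcomm : ∀ x, x * z = z * x := fun x => hz.commute x
  have hF : ∀ x y, y ∈ F x → F y = F x := by
    intro x y hy
    simp only [F, Finset.mem_insert, Finset.mem_singleton] at hy
    rcases hy with rfl | rfl | rfl | rfl
    · rfl
    all_goals
      ext w
      simp only [F, Finset.mem_insert, Finset.mem_singleton, inv_inv, mul_inv_rev, hzi, hcomm, hzz]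
      tauto
  have hFcard : ∀ x ∈ S, (F x).card = 4 := by
    intro x hx
    have hx4 : x ^ 4 ≠ 1 := (Finset.mem_filter.mp hx).2
    have h1 : x ≠ x⁻¹ := fun h => hx4 (by
      have : x * x = 1 := by nth_rw 2 [h]; exact mul_inv_cancel x
      rw [show 4 = 2 * 2 from rfl, pow_mul, pow_two x, this, one_pow])
    have h2 : ∀ w, w ≠ z * w := fun w h => hz.1 (by simpa using h)
    have h3 : x ≠ z * x⁻¹ := fun h => hx4 (by
      have : x * x = z := by nth_rw 1 [h]; rw [inv_mul_cancel_right]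
      rw [show 4 = 2 * 2 from rfl, pow_mul, pow_two x, this, hz.sq])
    have h4 : x⁻¹ ≠ z * x := fun h => h3 (by rw [h, hzz])
    have h5 : z * x ≠ z * x⁻¹ := fun h => h1 (mul_left_cancel h)
    simp only [F]
    rw [Finset.card_insert_of_notMem, Finset.card_insert_of_notMem, Finset.card_insert_of_notMem,
      Finset.card_singleton] <;> simp [h1, h2, h3, h4, h5]
  have hSF : ∀ x ∈ S, F x ⊆ S := by
    intro x hx y hy
    have hx4 : x ^ 4 ≠ 1 := (Finset.mem_filter.mp hx).2
    have hz4 : z ^ 4 = 1 := by rw [show 4 = 2 * 2 from rfl, pow_mul, hz.sq, one_pow]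
    refine Finset.mem_filter.mpr ⟨Finset.mem_univ _, ?_⟩
    simp only [F, Finset.mem_insert, Finset.mem_singleton] at hy
    rcases hy with rfl | rfl | rfl | rfl
    · exact hx4
    · rw [inv_pow]; exact inv_ne_one.mpr hx4
    · rw [(hz.commute x).symm.mul_pow, hz4, one_mul]; exact hx4
    · rw [(hz.commute x⁻¹).symm.mul_pow, hz4, one_mul, inv_pow]; exact inv_ne_one.mpr hx4
  have hdiv : 4 ∣ S.card := by
    rw [Finset.card_eq_sum_card_image F S]
    refine Finset.dvd_sum fun A hA => ?_
    obtain ⟨x, hx, rfl⟩ := Finset.mem_image.mp hA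
    have : S.filter (fun y => F y = F x) = F x := by
      ext y
      refine ⟨fun hy => ?_, fun hy => Finset.mem_filter.mpr ⟨hSF x hx hy, hF x y hy⟩⟩
      rw [← (Finset.mem_filter.mp hy).2]
      simp [F]
    rw [this, hFcard x hx]
  have hcount : orderCount Γ 4 = (Finset.univ.filter (fun x : Γ => orderOf x = 4)).card := by
    rw [orderCount, Nat.card_eq_fintype_card, Fintype.card_subtype]
  have hpart : (Finset.univ.filter (fun x : Γ => x ^ 4 = 1)).card = orderCount Γ 4 + 2 := by
    have : (Finset.univ.filter (fun x : Γ => x ^ 4 = 1)) =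
        (Finset.univ.filter (fun x : Γ => orderOf x = 4)) ∪ {1, z} := by
      ext x
      simp only [Finset.mem_filter, Finset.mem_univ, true_and, Finset.mem_union,
        Finset.mem_insert, Finset.mem_singleton, hz.orderOf_eq_four_iff]
      rw [show 4 = 2 * 2 from rfl, pow_mul, hz.2, hz.2]
      tauto
    rw [this, Finset.card_union_of_disjoint, hcount, Finset.card_pair hz.1.symm]
    rw [Finset.disjoint_left]
    intro x hx hx'
    have h4 := (Finset.mem_filter.mp hx).2
    rcases Finset.mem_insert.mp hx' with rfl | hx'
    · simp at h4
    · rw [Finset.mem_singleton.mp hx', hz.orderOf_eq] at h4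
      omega
  have htot := Finset.card_filter_add_card_filter_not (s := (Finset.univ : Finset Γ))
    (fun x : Γ => x ^ 4 = 1)
  rw [hpart, Finset.card_univ, ← Nat.card_eq_fintype_card] at htot
  change _ + S.card = _ at htot
  omega

/-- An element `b` outside `⟨y⟩` that normalizes `⟨y⟩` and whose square lies in `⟨y⟩` either has
`y` among its powers or acts on `y` as in a generalized quaternion group. -/
lemma mem_zpowers_or_inverts (hz : IsUniqueInvolution z) {N : ℕ} (hN : N = 4 ∨ N = 8 ∨ N = 16)
    {y b : Γ} (hy : orderOf y = N) (hb : b ∉ Subgroup.zpowers y)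
    (hconj : b * y * b⁻¹ ∈ Subgroup.zpowers y) (hsq : b ^ 2 ∈ Subgroup.zpowers y) :
    y ∈ Subgroup.zpowers b ∨ (b * y * b⁻¹ = y⁻¹ ∧ b ^ 2 = z) := by
  obtain ⟨s, hs⟩ := hconj
  obtain ⟨j, hj⟩ := hsq
  simp only at hs hj
  have hb2 : b ^ 2 = b * b := pow_two b
  have key := fun u v : ℤ => zpow_eq_zpow_iff_intCast_eq hy u v
  have hconj' : ∀ u : ℤ, b * y ^ u * b⁻¹ = y ^ (s * u) := fun u => by
    rw [← conj_zpow, ← hs, zpow_mul]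
  have hs2 : ((s * s : ℤ) : ZMod N) = (1 : ℤ) := by
    rw [← key, ← hconj', hs, zpow_one]
    have h : y * b ^ 2 = b ^ 2 * y := by rw [← hj]; exact (Commute.refl y).zpow_right j
    rw [hb2] at h
    calc b * (b * y * b⁻¹) * b⁻¹ = b * b * y * (b * b)⁻¹ := by group
      _ = y := by rw [← h, mul_inv_cancel_right]
  have hsj : ((s * j : ℤ) : ZMod N) = j := by
    rw [← key, ← hconj', hj, hb2]
    group
  have hzy : y ^ ((N / 2 : ℕ) : ℤ) = z := by
    rw [zpow_natCast]
    exact hz.mem_zpowers (by rw [hy]; omega) (by omega)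
  have hne : ∀ i : ℤ, ((i + s * i + j : ℤ) : ZMod N) ≠ (0 : ℤ) := by
    intro i h
    rw [← key, zpow_add, zpow_add, ← hconj', hj, hb2, zpow_zero] at h
    have h' : (y ^ i * b) ^ 2 = 1 := by
      rw [← h, pow_two]
      group
    refine hb ((Subgroup.mul_mem_cancel_left _ (Subgroup.zpow_mem _ (Subgroup.mem_zpowers y) i)).mp
      (?_ : y ^ i * b ∈ Subgroup.zpowers y))
    rcases (hz.2 _).mp h' with h'' | h'' <;> rw [h'']
    · exact one_mem _
    · exact ⟨_, hzy⟩
  have hne' : ∀ i : ZMod N, i + s * i + j ≠ 0 := fun i h => by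
    obtain ⟨i, rfl⟩ := ZMod.intCast_surjective i
    exact hne i (by push_cast; exact h)
  push_cast at hs2 hsj
  have hcases : (∃ l : ZMod N, l * j = 1) ∨ ((s : ZMod N) = -1 ∧ (j : ZMod N) = (N / 2 : ℕ)) := by
    revert hs2 hsj hne'
    generalize (s : ZMod N) = s'
    generalize (j : ZMod N) = j'
    clear * - hN
    revert s' j'
    rcases hN with rfl | rfl | rfl <;> decide +kernel
  rcases hcases with ⟨l, hl⟩ | ⟨h1, h2⟩
  · left
    obtain ⟨l, rfl⟩ := ZMod.intCast_surjective l
    have : y ^ (j * l) = y ^ (1 : ℤ) := (key _ _).mpr (by push_cast; rw [mul_comm]; exact hl)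
    refine ⟨2 * l, ?_⟩
    simp only [zpow_mul]
    rw [show b ^ (2 : ℤ) = b ^ 2 from by norm_cast, ← hj, ← zpow_mul, this, zpow_one]
  · right
    refine ⟨?_, ?_⟩
    · rw [← hs, ← zpow_neg_one, key]
      push_cast; exact h1
    · rw [← hj, ← hzy, key]
      push_cast; exact_mod_cast h2

/-- A group of order `2 * N` with an element `y` of order `N` is cyclic, or every element outside
`⟨y⟩` squares to the involution and inverts `y`. -/
lemma isCyclic_or_inverts (hz : IsUniqueInvolution z) {N : ℕ} (hN : N = 4 ∨ N = 8 ∨ N = 16)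
    (hcard : Nat.card Γ = 2 * N) {y : Γ} (hy : orderOf y = N) :
    IsCyclic Γ ∨ ∀ b ∉ Subgroup.zpowers y, b * y * b⁻¹ = y⁻¹ ∧ b ^ 2 = z := by
  have : Finite Γ := Nat.finite_of_card_ne_zero (by omega)
  have hyc : Nat.card (Subgroup.zpowers y) = N := by rw [Nat.card_zpowers, hy]
  have hindex : (Subgroup.zpowers y).index = 2 := by
    have := (Subgroup.zpowers y).card_mul_index
    rw [hyc, hcard, mul_comm] at this
    exact Nat.eq_of_mul_eq_mul_right (by omega) this
  have hnorm : (Subgroup.zpowers y).Normal := Subgroup.normal_of_index_eq_two hindex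
  by_cases h : ∀ b ∉ Subgroup.zpowers y, b * y * b⁻¹ = y⁻¹ ∧ b ^ 2 = z
  · exact Or.inr h
  · push Not at h
    obtain ⟨b, hb, hb'⟩ := h
    rcases hz.mem_zpowers_or_inverts hN hy hb (hnorm.conj_mem _ (Subgroup.mem_zpowers y) b)
      (Subgroup.sq_mem_of_index_two hindex b) with h1 | ⟨h1, h2⟩
    · left
      have hle : Subgroup.zpowers y ≤ Subgroup.zpowers b := Subgroup.zpowers_le.mpr h1
      have htop : Subgroup.zpowers b = ⊤ := by
        refine Subgroup.eq_top_of_card_eq _ ?_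
        obtain ⟨c, hc⟩ := Subgroup.card_dvd_of_le hle
        have hd := (Subgroup.zpowers b).card_subgroup_dvd_card
        rw [hyc] at hc
        rw [hc, hcard, mul_comm 2] at hd
        have hc2 : c ∣ 2 := Nat.dvd_of_mul_dvd_mul_left (by omega) hd
        rcases (Nat.dvd_prime Nat.prime_two).mp hc2 with rfl | rfl
        · refine absurd ?_ hb
          rw [Subgroup.eq_of_le_of_card_ge hle (by omega)]
          exact Subgroup.mem_zpowers b
        · omega
      exact ⟨b, fun x => htop.ge (Subgroup.mem_top x)⟩
    · exact absurd h2 (hb' h1)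

lemma orderCount_four_of_inverts (hz : IsUniqueInvolution z) {N : ℕ} (hN : 4 ∣ N) (hN0 : N ≠ 0)
    (hcard : Nat.card Γ = 2 * N) {y : Γ} (hy : orderOf y = N)
    (h : ∀ b ∉ Subgroup.zpowers y, b ^ 2 = z) : orderCount Γ 4 = N + 2 := by
  have : Finite Γ := Nat.finite_of_card_ne_zero (by omega)
  have hyc : Nat.card (Subgroup.zpowers y) = N := by rw [Nat.card_zpowers, hy]
  rw [orderCount_eq_add (Subgroup.zpowers y), orderCount_of_isCyclic (by rwa [hyc]),
    show Nat.totient 4 = 2 from by decide, add_comm]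
  congr 1
  have h1 : Nat.card {x : Γ // x ∉ Subgroup.zpowers y ∧ orderOf x = 4} =
      Nat.card {x : Γ // x ∉ Subgroup.zpowers y} :=
    Nat.card_congr (Equiv.subtypeEquivRight fun x =>
      ⟨fun h => h.1, fun hx => ⟨hx, hz.orderOf_eq_four_iff.mpr (h x hx)⟩⟩)
  have h2 : Nat.card Γ = Nat.card (Subgroup.zpowers y) +
      Nat.card {x : Γ // x ∉ Subgroup.zpowers y} := by
    classical
    rw [← Nat.card_sum]
    exact Nat.card_congr (Equiv.sumCompl (· ∈ Subgroup.zpowers y)).symm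
  omega

end IsUniqueInvolution

end UniqueInvolution

/-! ### Complements of order `24`, `48` and `288` -/

section Complements

variable {Γ : Type*} [Group Γ] {z : Γ}

lemma isNilpotent_of_isComplement'_of_commute {P Q : Subgroup Γ} (hP : Group.IsNilpotent P)
    (hQ : Group.IsNilpotent Q) (hPQ : P.IsComplement' Q)
    (hcomm : ∀ x ∈ P, ∀ y ∈ Q, Commute x y) : Group.IsNilpotent Γ := by
  let f : P × Q →* Γ := MonoidHom.noncommCoprod P.subtype Q.subtype
    fun x y => hcomm x x.2 y y.2
  have := Group.isNilpotent_prod (G₁ := P) (G₂ := Q)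
  exact Group.nilpotent_of_surjective f hPQ.2

lemma inv_pow_mul_mul_pow_eq {a b : Γ} {t : ℤ} (h : b⁻¹ * a * b = a ^ t) (k : ℕ) :
    (b ^ k)⁻¹ * a * b ^ k = a ^ (t ^ k) := by
  induction k with
  | zero => simp
  | succ k ih =>
    have h1 : (b ^ (k + 1))⁻¹ * a * b ^ (k + 1) = b⁻¹ * ((b ^ k)⁻¹ * a * b ^ k) * b := by
      rw [pow_succ]; group
    have h2 : b⁻¹ * a ^ (t ^ k) * b = (b⁻¹ * a * b) ^ (t ^ k) := by
      have := conj_zpow (i := t ^ k) (a := b⁻¹) (b := a)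
      rw [inv_inv] at this
      exact this.symm
    rw [h1, ih, h2, h, ← zpow_mul, pow_succ']

lemma minFac_eq_two {n : ℕ} (h : 2 ∣ n) : n.minFac = 2 := Nat.minFac_eq_two_iff n |>.mpr h

/-- A non-nilpotent group of order `3 ^ e * 2 ^ n` with cyclic Sylow subgroups. -/
lemma nonempty_mulEquiv_metacyclic [Finite Γ] {e n : ℕ} (he : e = 1 ∨ e = 2)
    (hn : n = 3 ∨ n = 4 ∨ n = 5) (hcard : Nat.card Γ = 3 ^ e * 2 ^ n)
    (hnil : ¬ Group.IsNilpotent Γ) (hcyc : ∀ P : Subgroup Γ, Nat.card P = 3 ^ e → IsCyclic P)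
    (Q : Subgroup Γ) (hQ : Nat.card Q = 2 ^ n) (hQc : IsCyclic Q) :
    Nonempty (Γ ≃* Metacyclic (3 ^ e) (2 ^ n) (-1)) := by
  have h2 : Fact (Nat.Prime 2) := ⟨Nat.prime_two⟩
  have hfact : (Nat.card Γ).factorization 2 = n := by
    rw [hcard, Nat.factorization_mul (by positivity) (by positivity), Nat.factorization_pow,
      Nat.factorization_pow]
    simp [Nat.prime_two.factorization, Nat.prime_three.factorization]
  let S : Sylow 2 Γ := Sylow.ofCard Q (by rw [hQ, hfact])
  have hSc : IsCyclic S := hQc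
  have hmin : (Nat.card Γ).minFac = 2 := minFac_eq_two (by
    rw [hcard]; exact Dvd.dvd.mul_left (dvd_pow_self 2 (by omega)) _)
  have hcompl := hSc.isComplement' hmin
  set N := (MonoidHom.transferSylow S (hSc.normalizer_le_centralizer hmin)).ker with hN
  change N.IsComplement' Q at hcompl
  have hNn : N.Normal := MonoidHom.normal_ker _
  have hNcard : Nat.card N = 3 ^ e := by
    have := hcompl.card_mul_card
    rw [hQ, hcard] at this
    exact Nat.eq_of_mul_eq_mul_right (by positivity) this
  obtain ⟨a, ha⟩ := Subgroup.isCyclic_iff_exists_zpowers_eq_top N |>.mp (hcyc N hNcard)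
  obtain ⟨b, hb⟩ := Subgroup.isCyclic_iff_exists_zpowers_eq_top Q |>.mp hQc
  have hao : orderOf a = 3 ^ e := by rw [← Nat.card_zpowers, ha, hNcard]
  have hbo : orderOf b = 2 ^ n := by rw [← Nat.card_zpowers, hb, hQ]
  have haN : a ∈ N := ha ▸ Subgroup.mem_zpowers a
  have hconj : b⁻¹ * a * b ∈ Subgroup.zpowers a := by
    rw [ha]
    simpa using hNn.conj_mem a haN b⁻¹
  obtain ⟨t, ht⟩ := hconj
  simp only at ht
  have htp := inv_pow_mul_mul_pow_eq ht.symm (2 ^ n)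
  rw [← hbo, pow_orderOf_eq_one, inv_one, one_mul, mul_one, hbo] at htp
  have htz : ((t : ZMod (3 ^ e)) ^ (2 ^ n)) = 1 := by
    have := (zpow_eq_zpow_iff_intCast_eq hao 1 (t ^ 2 ^ n)).mp (by rw [zpow_one]; exact htp)
    push_cast at this
    exact this.symm
  have htpm : (t : ZMod (3 ^ e)) = 1 ∨ (t : ZMod (3 ^ e)) = -1 := by
    revert htz
    generalize (t : ZMod (3 ^ e)) = t'
    clear * - he hn
    revert t'
    rcases he with rfl | rfl <;> rcases hn with rfl | rfl | rfl <;> decide +kernel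
  rcases htpm with h1 | h1
  · refine absurd ?_ hnil
    have hta : a ^ t = a ^ (1 : ℤ) :=
      (zpow_eq_zpow_iff_intCast_eq hao _ _).mpr (by push_cast; exact h1)
    rw [hta, zpow_one] at ht
    have hab : Commute a b := by
      change a * b = b * a
      nth_rw 2 [ht]
      group
    have : IsCyclic N := hcyc N hNcard
    refine isNilpotent_of_isComplement'_of_commute (P := N) (Q := Q)
      (@CommGroup.isNilpotent N IsCyclic.commGroup) (@CommGroup.isNilpotent Q IsCyclic.commGroup)
      hcompl ?_
    intro x hx y hy
    rw [← ha] at hx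
    rw [← hb] at hy
    obtain ⟨u, rfl⟩ := hx
    obtain ⟨v, rfl⟩ := hy
    exact (hab.zpow_left u).zpow_right v
  · have hta : a ^ t = a ^ (-1 : ℤ) :=
      (zpow_eq_zpow_iff_intCast_eq hao _ _).mpr (by push_cast; exact h1)
    rw [hta, zpow_neg_one] at ht
    refine Metacyclic.nonempty_mulEquiv (a := a) (b := b) (by positivity) (by positivity)
      (hao ▸ pow_orderOf_eq_one a) (hbo ▸ pow_orderOf_eq_one b) ht.symm ?_ hcard
    rw [Set.insert_eq, Subgroup.closure_union, ← Subgroup.zpowers_eq_closure,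
      ← Subgroup.zpowers_eq_closure, ha, hb, hcompl.sup_eq_top]

lemma mem_of_orderCount_eq [Finite Γ] {Q : Subgroup Γ} {d : ℕ}
    (h : orderCount Γ d = orderCount Q d) {x : Γ} (hx : orderOf x = d) : x ∈ Q := by
  rw [orderCount_eq_add Q] at h
  by_contra hxQ
  have : IsEmpty {x : Γ // x ∉ Q ∧ orderOf x = d} := by
    rw [← not_nonempty_iff]
    intro hne
    have := Nat.card_pos (α := {x : Γ // x ∉ Q ∧ orderOf x = d})
    omega
  exact this.false ⟨x, hxQ, hx⟩

lemma mem_zpowers_coe {Q : Subgroup Γ} {x y : Q} :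
    x ∈ Subgroup.zpowers y ↔ (x : Γ) ∈ Subgroup.zpowers (y : Γ) := by
  simp only [Subgroup.mem_zpowers_iff, Subtype.ext_iff, Subgroup.coe_zpow]

/-- `Q` is a subgroup of order `2 * N` in which `y` has order `N` and every element of `Q` outside
`⟨y⟩` inverts `y` and squares to `z`. -/
structure IsQuaternionWith (z : Γ) (Q : Subgroup Γ) (N : ℕ) (y : Γ) : Prop where
  card : Nat.card Q = 2 * N
  mem : y ∈ Q
  order : orderOf y = N
  pos : N ≠ 0
  conj : ∀ b ∈ Q, b ∉ Subgroup.zpowers y → b * y * b⁻¹ = y⁻¹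
  sq : ∀ b ∈ Q, b ∉ Subgroup.zpowers y → b ^ 2 = z

namespace IsQuaternionWith

variable {Q : Subgroup Γ} {N : ℕ} {y : Γ}

lemma zpowers_le (h : IsQuaternionWith z Q N y) : Subgroup.zpowers y ≤ Q :=
  Subgroup.zpowers_le.mpr h.mem

lemma index_two (h : IsQuaternionWith z Q N y) :
    (Subgroup.zpowers (⟨y, h.mem⟩ : Q)).index = 2 := by
  have := (Subgroup.zpowers (⟨y, h.mem⟩ : Q)).card_mul_index
  rw [h.card, Nat.card_zpowers, Subgroup.orderOf_mk, h.order, mul_comm] at this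
  exact Nat.eq_of_mul_eq_mul_right (Nat.pos_of_ne_zero h.pos) this

lemma mul_mem_iff (h : IsQuaternionWith z Q N y) {b c : Γ} (hb : b ∈ Q) (hc : c ∈ Q) :
    b * c ∈ Subgroup.zpowers y ↔ (b ∈ Subgroup.zpowers y ↔ c ∈ Subgroup.zpowers y) := by
  have := Subgroup.mul_mem_iff_of_index_two h.index_two (a := ⟨b, hb⟩) (b := ⟨c, hc⟩)
  simp only [mem_zpowers_coe] at this
  exact this

lemma exists_eq_zpow_mul (h : IsQuaternionWith z Q N y) {b c : Γ} (hb : b ∈ Q) (hc : c ∈ Q)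
    (hb' : b ∉ Subgroup.zpowers y) (hc' : c ∉ Subgroup.zpowers y) :
    ∃ i : ℤ, c = y ^ i * b := by
  have : c * b⁻¹ ∈ Subgroup.zpowers y :=
    (h.mul_mem_iff hc (inv_mem hb)).mpr (by simp [hb', hc'])
  obtain ⟨i, hi⟩ := this
  exact ⟨i, by simp only at hi; rw [hi, inv_mul_cancel_right]⟩

lemma exists_notMem (h : IsQuaternionWith z Q N y) : ∃ b ∈ Q, b ∉ Subgroup.zpowers y := by
  by_contra! hcon
  have hle : Q ≤ Subgroup.zpowers y := hcon
  have := congrArg (fun S : Subgroup Γ => Nat.card S) (le_antisymm hle h.zpowers_le)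
  simp only [h.card, Nat.card_zpowers, h.order] at this
  have := h.pos
  omega

lemma orderCount_four (h : IsQuaternionWith z Q N y) (hz : IsUniqueInvolution z) [Finite Γ]
    (hN : 4 ∣ N) : orderCount Q 4 = N + 2 := by
  have hzQ : z ∈ Q := hz.mem_of_even_card (by rw [h.card]; exact dvd_mul_right 2 N)
  refine (hz.subgroup hzQ).orderCount_four_of_inverts hN h.pos h.card (y := ⟨y, h.mem⟩)
    ((Subgroup.orderOf_mk _ _).trans h.order) fun b hb => ?_
  rw [mem_zpowers_coe] at hb
  exact Subtype.ext (h.sq b b.2 hb)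

lemma normal (h : IsQuaternionWith z Q N y) (hz : IsUniqueInvolution z)
    (h4 : ∀ x : Γ, orderOf x = 4 → x ∈ Q) : Q.Normal := by
  have key : ∀ b ∈ Q, b ∉ Subgroup.zpowers y → ∀ g : Γ, g * b * g⁻¹ ∈ Q := by
    intro b hb hby g
    refine h4 _ ?_
    rw [hz.orderOf_eq_four_iff, conj_pow, h.sq b hb hby, (hz.commute g).eq, mul_inv_cancel_right]
  obtain ⟨b, hb, hby⟩ := h.exists_notMem
  refine ⟨fun x hx g => ?_⟩
  by_cases hxy : x ∈ Subgroup.zpowers y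
  · have h1 := key (x * b) (mul_mem hx hb) (fun hc => hby
      ((Subgroup.mul_mem_cancel_left _ hxy).mp hc)) g
    have h2 := key b hb hby g
    have : g * x * g⁻¹ = (g * (x * b) * g⁻¹) * (g * b * g⁻¹)⁻¹ := by group
    rw [this]
    exact mul_mem h1 (inv_mem h2)
  · exact key x hx hxy g

/-- An element of order dividing `9` normalizing `Q` and `⟨y⟩` centralizes `Q`. -/
lemma commute (h : IsQuaternionWith z Q N y) (hN : N = 4 ∨ N = 8 ∨ N = 16) (hQ : Q.Normal)
    {m : ℕ} (hm : m = 3 ∨ m = 9) {a : Γ} (ha : a ^ m = 1)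
    (hay : a * y * a⁻¹ ∈ Subgroup.zpowers y) {x : Γ} (hx : x ∈ Q) : Commute a x := by
  have key := fun u v : ℤ => zpow_eq_zpow_iff_intCast_eq h.order u v
  have hcy : Commute a y := by
    obtain ⟨t, ht⟩ := hay
    simp only at ht
    have h1 := inv_pow_mul_mul_pow_eq (a := y) (b := a⁻¹) (t := t) (by rw [inv_inv, ht]) m
    rw [inv_pow, ha, inv_one, inv_one, one_mul, mul_one] at h1
    have h2 := (key 1 (t ^ m)).mp (by rw [zpow_one]; exact h1)
    push_cast at h2
    have h3 : (t : ZMod N) = 1 := by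
      revert h2
      generalize (t : ZMod N) = t'
      clear * - hN hm
      revert t'
      rcases hN with rfl | rfl | rfl <;> rcases hm with rfl | rfl <;> decide +kernel
    have h4 : y ^ t = y ^ (1 : ℤ) := (key _ _).mpr (by push_cast; exact h3)
    rw [h4, zpow_one] at ht
    exact (mul_inv_eq_iff_eq_mul.mp ht.symm)
  by_cases hxy : x ∈ Subgroup.zpowers y
  · obtain ⟨i, rfl⟩ := hxy
    exact hcy.zpow_right i
  · have hax : a * x * a⁻¹ ∈ Q := hQ.conj_mem x hx a
    have haxy : a * x * a⁻¹ ∉ Subgroup.zpowers y := by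
      rintro ⟨i, hi⟩
      simp only at hi
      have h1 : x = a⁻¹ * y ^ i * a := by rw [hi]; group
      have h2 : a⁻¹ * y ^ i * a = y ^ i := by
        rw [mul_assoc, ← (hcy.zpow_right i).eq, inv_mul_cancel_left]
      exact hxy ⟨i, by simp only; rw [h1, h2]⟩
    obtain ⟨i, hi⟩ := h.exists_eq_zpow_mul hx hax hxy haxy
    have hpow : ∀ k : ℕ, a ^ k * x * (a ^ k)⁻¹ = y ^ (k * i) * x := by
      intro k
      induction k with
      | zero => simp
      | succ k ih =>
        have h1 : a ^ (k + 1) * x * (a ^ (k + 1))⁻¹ = a * (a ^ k * x * (a ^ k)⁻¹) * a⁻¹ := by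
          rw [pow_succ']; group
        have h2 : a * (y ^ (k * i) * x) * a⁻¹ = y ^ (k * i) * (a * x * a⁻¹) := by
          rw [← mul_assoc, (hcy.zpow_right _).eq]; group
        rw [h1, ih, h2, hi, ← mul_assoc, ← zpow_add]
        congr 2
        push_cast
        ring
    have h1 := hpow m
    rw [ha, one_mul, inv_one, mul_one] at h1
    have h2 : y ^ ((m : ℤ) * i) = y ^ (0 : ℤ) := by
      rw [zpow_zero]; exact (mul_eq_right.mp h1.symm)
    have h3 := (key _ _).mp h2
    push_cast at h3
    have h4 : (i : ZMod N) = 0 := by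
      revert h3
      generalize (i : ZMod N) = t'
      clear * - hN hm
      revert t'
      rcases hN with rfl | rfl | rfl <;> rcases hm with rfl | rfl <;> decide +kernel
    have h5 : y ^ i = y ^ (0 : ℤ) := (key _ _).mpr (by push_cast; exact h4)
    rw [h5, zpow_zero, one_mul] at hi
    exact mul_inv_eq_iff_eq_mul.mp hi

/-- If a `3`-complement of the normal subgroup `Q` normalizes `⟨y⟩`, the group is nilpotent. -/
lemma isNilpotent (h : IsQuaternionWith z Q N y) [Finite Γ] (hN : N = 4 ∨ N = 8 ∨ N = 16)
    (hQ : Q.Normal) {P : Subgroup Γ} {e : ℕ} (he : e = 1 ∨ e = 2) (hP : Nat.card P = 3 ^ e)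
    (hcard : Nat.card Γ = 3 ^ e * (2 * N))
    (hPy : ∀ a ∈ P, a * y * a⁻¹ ∈ Subgroup.zpowers y) : Group.IsNilpotent Γ := by
  have : Fact (Nat.Prime 2) := ⟨Nat.prime_two⟩
  have : Fact (Nat.Prime 3) := ⟨Nat.prime_three⟩
  have hQp : IsPGroup 2 Q := by
    rcases hN with rfl | rfl | rfl
    · exact IsPGroup.of_card (n := 3) h.card
    · exact IsPGroup.of_card (n := 4) h.card
    · exact IsPGroup.of_card (n := 5) h.card
  refine isNilpotent_of_isComplement'_of_commute (IsPGroup.of_card hP).isNilpotent hQp.isNilpotent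
    (Subgroup.isComplement'_of_coprime (by rw [hP, h.card, hcard]) ?_) ?_
  · rw [hP, h.card]
    rcases hN with rfl | rfl | rfl <;> rcases he with rfl | rfl <;> decide
  · intro a ha x hx
    refine h.commute hN hQ (m := 3 ^ e) (by rcases he with rfl | rfl <;> simp) ?_ (hPy a ha) hx
    have := pow_card_eq_one' (x := (⟨a, ha⟩ : P))
    rw [hP] at this
    exact congrArg Subtype.val this

end IsQuaternionWith

lemma IsUniqueInvolution.isCyclic_or_isQuaternionWith (hz : IsUniqueInvolution z) [Finite Γ] {N : ℕ}
    (hN : N = 4 ∨ N = 8 ∨ N = 16) {Q : Subgroup Γ} (hcard : Nat.card Q = 2 * N) {y : Γ}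
    (hyQ : y ∈ Q) (hy : orderOf y = N) : IsCyclic Q ∨ IsQuaternionWith z Q N y := by
  have hzQ : z ∈ Q := hz.mem_of_even_card (by rw [hcard]; exact dvd_mul_right 2 N)
  refine ((hz.subgroup hzQ).isCyclic_or_inverts hN hcard (y := ⟨y, hyQ⟩)
    ((Subgroup.orderOf_mk _ _).trans hy)).imp_right fun h => ?_
  simp only [mem_zpowers_coe] at h
  refine ⟨hcard, hyQ, hy, by omega, fun b hb hby => ?_, fun b hb hby => ?_⟩
  · exact congrArg Subtype.val (h ⟨b, hb⟩ hby).1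
  · exact congrArg Subtype.val (h ⟨b, hb⟩ hby).2

end Complements

section ComplementOrders

variable {Γ : Type*} [Group Γ] {z : Γ}

lemma orderCount_subgroup_le [Finite Γ] (Q : Subgroup Γ) (d : ℕ) :
    orderCount Q d ≤ orderCount Γ d := by
  rw [orderCount_eq_add Q]
  exact Nat.le_add_right _ _

lemma PerfectOrderClasses.orderCount_four_dvd (h : PerfectOrderClasses Γ) [Finite Γ]
    (hz : IsUniqueInvolution z) (h4 : 4 ∣ Nat.card Γ) :
    orderCount Γ 4 ∣ Nat.card Γ ∧ orderCount Γ 4 % 4 = 2 := by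
  have h2 := hz.orderCount_four_mod h4
  exact ⟨(h 4 (by norm_num)).resolve_left (by omega), h2⟩

lemma eq_two_or_six_of_dvd {f n : ℕ} (hn : n = 24 ∨ n = 48) (hf : f ∣ n) (hf4 : f % 4 = 2) :
    f = 2 ∨ f = 6 := by
  have hfl : f < 49 := Nat.lt_succ_of_le ((Nat.le_of_dvd (by omega) hf).trans (by omega))
  revert hf hf4
  revert f
  rcases hn with rfl | rfl <;> decide +kernel

lemma le_eighteen_of_dvd {f : ℕ} (hf : f ∣ 288) (hf4 : f % 4 = 2) : f ≤ 18 := by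
  obtain ⟨g, hg⟩ : 2 ∣ f := by omega
  have hg2 : ¬ 2 ∣ g := by omega
  have h1 : g ∣ 2 ^ 4 * 9 := by
    rw [hg] at hf
    exact Nat.dvd_of_mul_dvd_mul_left (by norm_num) (hf : 2 * g ∣ 2 * (2 ^ 4 * 9))
  have h2 : Nat.Coprime g (2 ^ 4) :=
    Nat.Coprime.pow_right 4 ((Nat.Prime.coprime_iff_not_dvd Nat.prime_two).mpr hg2).symm
  have := Nat.le_of_dvd (by norm_num) (h2.dvd_of_dvd_mul_left h1)
  omega

lemma IsUniqueInvolution.exists_orderOf_eq_four (hz : IsUniqueInvolution z) [Finite Γ]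
    {Q : Subgroup Γ} (hQ : Nat.card Q = 8) : ∃ y ∈ Q, orderOf y = 4 := by
  by_contra! hcon
  have : Fact (Nat.Prime 2) := ⟨Nat.prime_two⟩
  have hle : ∀ x : Q, (x : Γ) ∈ ({1, z} : Set Γ) := by
    intro x
    have hx : orderOf (x : Γ) ∣ 2 ^ 3 := by
      rw [Subgroup.orderOf_coe]; exact (orderOf_dvd_natCard x).trans hQ.dvd
    obtain ⟨k, hk, hxk⟩ := (Nat.dvd_prime_pow Nat.prime_two).mp hx
    have hk3 : k ≠ 3 := by
      rintro rfl
      refine hcon ((x : Γ) ^ 2) (pow_mem x.2 2) ?_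
      rw [orderOf_pow_of_dvd two_ne_zero (by rw [hxk]; norm_num), hxk]; norm_num
    have hk2 : k ≠ 2 := by
      rintro rfl
      exact hcon x x.2 hxk
    refine (hz.2 _).mp (orderOf_dvd_iff_pow_eq_one.mp ?_)
    rw [hxk]
    exact pow_dvd_pow 2 (by omega : k ≤ 1)
  have := Nat.card_le_card_of_injective (fun x : Q => (⟨x, hle x⟩ : ({1, z} : Set Γ)))
    (fun x y h => Subtype.ext (congrArg (fun w : ({1, z} : Set Γ) => (w : Γ)) h))
  rw [hQ, Nat.card_coe_set_eq, Set.ncard_pair hz.1.symm] at this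
  omega

lemma IsUniqueInvolution.exists_orderOf_eq_eight (hz : IsUniqueInvolution z) [Finite Γ]
    {Q : Subgroup Γ} (hQ : Nat.card Q = 16) (h4 : orderCount Γ 4 < 14) :
    ∃ y ∈ Q, orderOf y = 8 := by
  by_contra! hcon
  have hzQ : z ∈ Q := hz.mem_of_even_card (by rw [hQ]; norm_num)
  have hzQ' := hz.subgroup hzQ
  have hord : ∀ x : Q, x ^ 4 = 1 := by
    intro x
    have hx : orderOf x ∣ 2 ^ 4 := (orderOf_dvd_natCard x).trans hQ.dvd
    obtain ⟨k, hk, hxk⟩ := (Nat.dvd_prime_pow Nat.prime_two).mp hx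
    have hk4 : k ≠ 4 := by
      rintro rfl
      refine hcon ((x ^ 2 : Q) : Γ) (x ^ 2).2 ?_
      rw [Subgroup.orderOf_coe, orderOf_pow_of_dvd two_ne_zero (by rw [hxk]; norm_num), hxk]
      norm_num
    have hk3 : k ≠ 3 := by
      rintro rfl
      exact hcon x x.2 (by rw [Subgroup.orderOf_coe, hxk]; norm_num)
    refine orderOf_dvd_iff_pow_eq_one.mp ?_
    rw [hxk]
    exact pow_dvd_pow 2 (by omega : k ≤ 2)
  have hadd := orderCount_eq_add (Subgroup.zpowers (⟨z, hzQ⟩ : Q)) 4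
  have hzc : Nat.card (Subgroup.zpowers (⟨z, hzQ⟩ : Q)) = 2 := by
    rw [Nat.card_zpowers, hzQ'.orderOf_eq]
  have h1 : Nat.card {x : Q // x ∉ Subgroup.zpowers (⟨z, hzQ⟩ : Q) ∧ orderOf x = 4} =
      Nat.card {x : Q // x ∉ Subgroup.zpowers (⟨z, hzQ⟩ : Q)} := by
    refine Nat.card_congr (Equiv.subtypeEquivRight fun x =>
      ⟨fun h => h.1, fun hx => ⟨hx, hzQ'.orderOf_eq_four_iff.mpr ?_⟩⟩)
    have h2 : (x ^ 2) ^ 2 = 1 := by rw [← pow_mul]; exact hord x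
    refine ((hzQ'.2 _).mp h2).resolve_left fun h3 => hx ?_
    rcases (hzQ'.2 _).mp h3 with rfl | rfl
    · exact one_mem _
    · exact Subgroup.mem_zpowers _
  have h2 : Nat.card Q = Nat.card (Subgroup.zpowers (⟨z, hzQ⟩ : Q)) +
      Nat.card {x : Q // x ∉ Subgroup.zpowers (⟨z, hzQ⟩ : Q)} := by
    classical
    rw [← Nat.card_sum]
    exact Nat.card_congr (Equiv.sumCompl (· ∈ Subgroup.zpowers (⟨z, hzQ⟩ : Q))).symm
  have := orderCount_subgroup_le Q 4
  omega

lemma isCyclic_of_card_three (P : Subgroup Γ) (hP : Nat.card P = 3 ^ 1) : IsCyclic P := by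
  have : Fact (Nat.Prime 3) := ⟨Nat.prime_three⟩
  exact isCyclic_of_prime_card (p := 3) (by rw [hP, pow_one])

/-- A non-nilpotent group of order `24` with perfect order classes and a unique involution. -/
lemma nonempty_mulEquiv_of_card_eq_24 (hz : IsUniqueInvolution z) (hcard : Nat.card Γ = 24)
    (hpoc : PerfectOrderClasses Γ) (hnil : ¬ Group.IsNilpotent Γ) :
    Nonempty (Γ ≃* Matrix.SpecialLinearGroup (Fin 2) (ZMod 3)) ∨
      Nonempty (Γ ≃* Metacyclic 3 8 (-1)) := by
  have : Finite Γ := Nat.finite_of_card_ne_zero (by omega)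
  have : Fact (Nat.Prime 2) := ⟨Nat.prime_two⟩
  have : Fact (Nat.Prime 3) := ⟨Nat.prime_three⟩
  obtain ⟨Q, hQ⟩ := Sylow.exists_subgroup_card_pow_prime (G := Γ) 2 (n := 3)
    (by rw [hcard]; norm_num)
  obtain ⟨y, hyQ, hy⟩ := hz.exists_orderOf_eq_four hQ
  rcases hz.isCyclic_or_isQuaternionWith (N := 4) (by simp) hQ hyQ hy with hQc | hq
  · right
    exact nonempty_mulEquiv_metacyclic (e := 1) (n := 3) (by simp) (by simp) hcard hnil
      isCyclic_of_card_three Q hQ hQc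
  · left
    obtain ⟨hf, hf4⟩ := hpoc.orderCount_four_dvd hz (by rw [hcard]; norm_num)
    have hle := orderCount_subgroup_le Q 4
    have hQ4 := hq.orderCount_four hz (dvd_refl 4)
    have hf6 := eq_two_or_six_of_dvd (Or.inl hcard) hf hf4
    have hQn : Q.Normal := hq.normal hz fun x hx => mem_of_orderCount_eq (by omega) hx
    have hc : ∀ c : Γ, orderOf c = 3 → c * y * c⁻¹ ∉ Subgroup.zpowers y := by
      intro c hc hcy
      refine hnil (hq.isNilpotent (by simp) hQn (P := Subgroup.zpowers c) (e := 1) (by simp)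
        (by rw [Nat.card_zpowers, hc, pow_one]) hcard ?_)
      rintro _ ⟨u, rfl⟩
      have := hq.commute (by simp) hQn (m := 3) (by simp) (hc ▸ pow_orderOf_eq_one c) hcy hyQ
      simp only
      rw [(this.zpow_left u).eq, mul_inv_cancel_right]
      exact Subgroup.mem_zpowers y
    obtain ⟨a, ha⟩ := exists_prime_orderOf_dvd_card' (G := Γ) 3 (by rw [hcard]; norm_num)
    have ha3 : a ^ 3 = 1 := ha ▸ pow_orderOf_eq_one a
    have ha2 : orderOf (a ^ 2) = 3 := by
      rw [Nat.Coprime.orderOf_pow (by rw [ha]; norm_num), ha]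
    obtain ⟨j, hjdef⟩ : ∃ j, j = a * y * a⁻¹ := ⟨_, rfl⟩
    have hj : j ∉ Subgroup.zpowers y := hjdef ▸ hc a ha
    have hjQ : j ∈ Q := hjdef ▸ hQn.conj_mem y hyQ a
    have haj : a * j * a⁻¹ ∉ Subgroup.zpowers y := by
      have := hc (a ^ 2) ha2
      rwa [show a ^ 2 * y * (a ^ 2)⁻¹ = a * j * a⁻¹ by rw [hjdef, pow_two]; group] at this
    obtain ⟨l, hl⟩ := hq.exists_eq_zpow_mul hjQ (hQn.conj_mem j hjQ a) hj haj
    have hj2 : j ^ 2 = z := hq.sq j hjQ hj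
    have hy2 : y ^ 2 = z := hz.orderOf_eq_four_iff.mp hy
    have hjy : j * y * j⁻¹ = y⁻¹ := hq.conj j hjQ hj
    have hji : j * y = y⁻¹ * j := mul_inv_eq_iff_eq_mul.mp hjy
    have hy4 : y ^ 4 = 1 := hy ▸ pow_orderOf_eq_one y
    have hnotj : a * j * a⁻¹ ∉ Subgroup.zpowers j := by
      rintro ⟨u, hu⟩
      simp only at hu
      rw [hjdef, conj_zpow] at hu
      exact hj ⟨u, by simpa [hjdef] using hu⟩
    have hgenQ : ∀ i : Γ, y ∈ Subgroup.zpowers i → Subgroup.closure {i, a} = ⊤ := by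
      intro i hi
      have hyc : y ∈ Subgroup.closure {i, a} :=
        (Subgroup.zpowers_le.mpr (Subgroup.subset_closure (by simp))) hi
      have hac : a ∈ Subgroup.closure {i, a} := Subgroup.subset_closure (by simp)
      have hjc : j ∈ Subgroup.closure {i, a} := hjdef ▸ mul_mem (mul_mem hac hyc) (inv_mem hac)
      have hcompl : Q.IsComplement' (Subgroup.zpowers a) :=
        Subgroup.isComplement'_of_coprime (by rw [hQ, Nat.card_zpowers, ha, hcard]; norm_num)
          (by rw [hQ, Nat.card_zpowers, ha]; norm_num)
      rw [eq_top_iff, ← hcompl.sup_eq_top, sup_le_iff]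
      refine ⟨fun q hqQ => ?_, Subgroup.zpowers_le.mpr hac⟩
      by_cases hqy : q ∈ Subgroup.zpowers y
      · exact (Subgroup.zpowers_le.mpr hyc) hqy
      · obtain ⟨v, rfl⟩ := hq.exists_eq_zpow_mul hjQ hqQ hj hqy
        exact mul_mem (Subgroup.zpow_mem _ hyc v) hjc
    have hl4 : (l : ZMod 4) = 1 ∨ (l : ZMod 4) = -1 := by
      have key := fun u v : ℤ => zpow_eq_zpow_iff_intCast_eq hy u v
      have h0 : (l : ZMod 4) ≠ 0 := by
        intro h
        have : y ^ l = y ^ (0 : ℤ) := (key _ _).mpr (by push_cast; exact h)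
        rw [this, zpow_zero, one_mul] at hl
        rw [hl] at hnotj
        exact hnotj (Subgroup.mem_zpowers j)
      have h2 : (l : ZMod 4) ≠ 2 := by
        intro h
        have : y ^ l = y ^ (2 : ℤ) := (key _ _).mpr (by push_cast; exact h)
        rw [this, show y ^ (2 : ℤ) = y ^ 2 by norm_cast, hy2, ← hj2] at hl
        rw [hl] at hnotj
        exact hnotj (mul_mem (pow_mem (Subgroup.mem_zpowers j) 2) (Subgroup.mem_zpowers j))
      revert h0 h2
      generalize (l : ZMod 4) = l'
      revert l'
      decide
    rcases hl4 with h | h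
    · have : y ^ l = y ^ (1 : ℤ) := (zpow_eq_zpow_iff_intCast_eq hy _ _).mpr (by push_cast; exact h)
      rw [this, zpow_one] at hl
      exact SLTwoThree.nonempty_mulEquiv hcard (i := y) (j := j) (a := a) hy4 (hj2.trans hy2.symm)
        hji (by rw [hjdef, inv_mul_cancel_right]) (mul_inv_eq_iff_eq_mul.mp hl) ha3
        (hgenQ y (Subgroup.mem_zpowers y))
    · have : y ^ l = y ^ (-1 : ℤ) :=
        (zpow_eq_zpow_iff_intCast_eq hy _ _).mpr (by push_cast; exact h)
      rw [this, zpow_neg_one] at hl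
      have hjy' : j⁻¹ * y = y⁻¹ * j⁻¹ := by
        have h1 : y = j⁻¹ * y⁻¹ * j := by rw [← hjy]; group
        have h2 : y⁻¹ = j⁻¹ * y * j := by nth_rw 1 [h1]; group
        rw [h2, mul_inv_cancel_right]
      refine SLTwoThree.nonempty_mulEquiv hcard (i := y⁻¹) (j := j⁻¹) (a := a)
        (by rw [inv_pow, hy4, inv_one]) (by rw [inv_pow, inv_pow, hj2, hy2]) ?_ ?_ ?_ ha3
        (hgenQ y⁻¹ (by rw [Subgroup.zpowers_inv]; exact Subgroup.mem_zpowers y))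
      · rw [inv_inv]
        calc j⁻¹ * y⁻¹ = y * (y⁻¹ * j⁻¹) * y⁻¹ := by group
          _ = y * j⁻¹ := by rw [← hjy']; group
      · rw [hjdef]; group
      · rw [← hjy']
        have h1 : a * j⁻¹ * a⁻¹ = (y⁻¹ * j)⁻¹ := by rw [← hl]; group
        rw [mul_inv_rev, inv_inv] at h1
        exact mul_inv_eq_iff_eq_mul.mp h1

/-- A non-nilpotent group of order `48` with perfect order classes and a unique involution. -/
lemma nonempty_mulEquiv_of_card_eq_48 (hz : IsUniqueInvolution z) (hcard : Nat.card Γ = 48)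
    (hpoc : PerfectOrderClasses Γ) (hnil : ¬ Group.IsNilpotent Γ) :
    Nonempty (Γ ≃* Metacyclic 3 16 (-1)) := by
  have : Finite Γ := Nat.finite_of_card_ne_zero (by omega)
  have : Fact (Nat.Prime 2) := ⟨Nat.prime_two⟩
  obtain ⟨Q, hQ⟩ := Sylow.exists_subgroup_card_pow_prime (G := Γ) 2 (n := 4)
    (by rw [hcard]; norm_num)
  obtain ⟨hf, hf4⟩ := hpoc.orderCount_four_dvd hz (by rw [hcard]; norm_num)
  have hf6 := eq_two_or_six_of_dvd (Or.inr hcard) hf hf4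
  obtain ⟨y, hyQ, hy⟩ := hz.exists_orderOf_eq_eight hQ (by omega)
  rcases hz.isCyclic_or_isQuaternionWith (N := 8) (by simp) hQ hyQ hy with hQc | hq
  · exact nonempty_mulEquiv_metacyclic (e := 1) (n := 4) (by simp) (by simp) hcard hnil
      isCyclic_of_card_three Q hQ hQc
  · have hle := orderCount_subgroup_le Q 4
    have hQ4 := hq.orderCount_four hz (by norm_num)
    omega

/-- A non-nilpotent group of order `288` with perfect order classes, a unique involution, an
element of order `16`, and whose subgroups of order `9` are cyclic. -/
lemma nonempty_mulEquiv_of_card_eq_288 (hz : IsUniqueInvolution z) (hcard : Nat.card Γ = 288)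
    (hpoc : PerfectOrderClasses Γ) (hnil : ¬ Group.IsNilpotent Γ) {y : Γ} (hy : orderOf y = 16)
    (hcyc : ∀ P : Subgroup Γ, Nat.card P = 3 ^ 2 → IsCyclic P) :
    Nonempty (Γ ≃* Metacyclic 9 32 (-1)) := by
  have : Finite Γ := Nat.finite_of_card_ne_zero (by omega)
  have : Fact (Nat.Prime 2) := ⟨Nat.prime_two⟩
  have : Fact (Nat.Prime 3) := ⟨Nat.prime_three⟩
  obtain ⟨Q, hQle⟩ := IsPGroup.exists_le_sylow (p := 2) (P := Subgroup.zpowers y)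
    (IsPGroup.of_card (n := 4) (by rw [Nat.card_zpowers, hy]; norm_num))
  have hQ : Nat.card Q = 2 ^ 5 := by
    rw [Sylow.card_eq_multiplicity, hcard, show 288 = 2 ^ 5 * 9 by norm_num,
      Nat.factorization_mul (by norm_num) (by norm_num), Nat.factorization_pow]
    simp [Nat.prime_two.factorization, Nat.factorization_eq_zero_of_not_dvd]
  have hyQ : y ∈ (Q : Subgroup Γ) := hQle (Subgroup.mem_zpowers y)
  rcases hz.isCyclic_or_isQuaternionWith (N := 16) (by simp) hQ hyQ hy with hQc | hq
  · exact nonempty_mulEquiv_metacyclic (e := 2) (n := 5) (by simp) (by simp) hcard hnil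
      hcyc Q hQ hQc
  · exfalso
    obtain ⟨hf, hf4⟩ := hpoc.orderCount_four_dvd hz (by rw [hcard]; norm_num)
    have hle := orderCount_subgroup_le (Q : Subgroup Γ) 4
    have hQ4 := hq.orderCount_four hz (by norm_num)
    rw [hcard] at hf
    have hf18 := le_eighteen_of_dvd hf hf4
    have hQn : (Q : Subgroup Γ).Normal :=
      hq.normal hz fun x hx => mem_of_orderCount_eq (by omega) hx
    obtain ⟨P, hP⟩ := Sylow.exists_subgroup_card_pow_prime (G := Γ) 3 (n := 2)
      (by rw [hcard]; norm_num)
    refine hnil (hq.isNilpotent (by simp) hQn (P := P) (e := 2) (by simp) hP hcard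
      fun a _ => ?_)
    by_contra hay
    have h1 := hq.sq _ (hQn.conj_mem y hyQ a) hay
    rw [← hz.orderOf_eq_four_iff] at h1
    have h2 : orderOf (a * y * a⁻¹) = orderOf y := by
      have := orderOf_injective (MulAut.conj a).toMonoidHom (MulAut.conj a).injective y
      simpa using this
    omega

end ComplementOrders

/-! ### Fixed-point-free semidirect products -/

section FixedPointFree

variable {N C : Type*} [Group N] [Group C]

/-- The action `φ` of `C` on `N` is fixed-point-free. -/
def IsFixedPointFree (φ : C →* MulAut N) : Prop :=
  ∀ h : C, h ≠ 1 → ∀ x : N, x ≠ 1 → φ h x ≠ x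

lemma orderCount_congr {A B : Type*} [Group A] [Group B] (e : A ≃* B) (n : ℕ) :
    orderCount A n = orderCount B n :=
  Nat.card_congr (e.toEquiv.subtypeEquiv fun a => by
    rw [MulEquiv.toEquiv_eq_coe, MulEquiv.coe_toEquiv, MulEquiv.orderOf_eq])

lemma PerfectOrderClasses.congr {A B : Type*} [Group A] [Group B] (e : A ≃* B)
    (h : PerfectOrderClasses A) : PerfectOrderClasses B := fun n hn => by
  rw [← orderCount_congr e, ← Nat.card_congr e.toEquiv]
  exact h n hn

lemma orderCount_one (A : Type*) [Group A] : orderCount A 1 = 1 := by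
  simp only [orderCount, orderOf_eq_one_iff]
  exact Nat.card_unique

namespace IsFixedPointFree

variable {φ : C →* MulAut N}

lemma eq_one (hφ : IsFixedPointFree φ) {h : C} {x : N} (hx : x ≠ 1) (hfix : φ h x = x) :
    h = 1 := by
  by_contra hh
  exact hφ h hh x hx hfix

lemma injective_apply (hφ : IsFixedPointFree φ) {x : N} (hx : x ≠ 1) :
    Function.Injective fun c => φ c x := by
  intro c d h
  have h1 : φ (d⁻¹ * c) x = x := by
    simp only at h
    rw [map_mul, MulAut.mul_apply, h, ← MulAut.mul_apply, ← map_mul, inv_mul_cancel, map_one,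
      MulAut.one_apply]
  exact (inv_mul_eq_one.mp (hφ.eq_one hx h1)).symm

lemma card_dvd (hφ : IsFixedPointFree φ) {p : N → Prop} (hp : ∀ c x, p x → p (φ c x))
    (h1 : ¬ p 1) : Nat.card C ∣ Nat.card {x // p x} := by
  let _ : MulAction C {x // p x} :=
    { smul := fun c x => ⟨φ c x, hp c x x.2⟩
      one_smul := fun x => Subtype.ext (by
        change φ 1 x = x
        rw [map_one, MulAut.one_apply])
      mul_smul := fun c d x => Subtype.ext (by
        change φ (c * d) x = φ c (φ d x)
        rw [map_mul, MulAut.mul_apply]) }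
  have hstab : ∀ x : {x // p x}, MulAction.stabilizer C x = ⊥ := fun x => by
    rw [eq_bot_iff]
    intro c hc
    exact hφ.eq_one (fun h => h1 (h ▸ x.2))
      (congrArg Subtype.val (MulAction.mem_stabilizer_iff.mp hc))
  rw [Nat.card_congr (MulAction.selfEquivOrbitsQuotientProd hstab), Nat.card_prod]
  exact dvd_mul_left _ _

lemma card_dvd_orderCount (hφ : IsFixedPointFree φ) {n : ℕ} (hn : n ≠ 1) :
    Nat.card C ∣ orderCount N n :=
  hφ.card_dvd (p := fun x => orderOf x = n) (fun c x hx => by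
    rw [MulEquiv.orderOf_eq, hx]) (by rw [orderOf_one]; exact hn.symm)

lemma transitive (hφ : IsFixedPointFree φ) [Finite C] {n : ℕ} (hn : n ≠ 1)
    (hcard : orderCount N n = Nat.card C) {x y : N} (hx : orderOf x = n) (hy : orderOf y = n) :
    ∃ c, φ c x = y := by
  let f : C → {w : N // orderOf w = n} := fun c => ⟨φ c x, by rw [MulEquiv.orderOf_eq, hx]⟩
  have hf : Function.Injective f := fun c d h =>
    hφ.injective_apply (fun h1 => hn (by rw [← hx, h1, orderOf_one])) (congrArg Subtype.val h)
  have hfin : Finite {w : N // orderOf w = n} :=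
    Nat.finite_of_card_ne_zero (by
      change orderCount N n ≠ 0
      rw [hcard]
      exact Nat.card_pos.ne')
  obtain ⟨c, hc⟩ := ((Nat.bijective_iff_injective_and_card f).mpr ⟨hf, hcard.symm⟩).2 ⟨y, hy⟩
  exact ⟨c, congrArg Subtype.val hc⟩

lemma coprime (hφ : IsFixedPointFree φ) [Finite N] : (Nat.card N).Coprime (Nat.card C) := by
  have h := hφ.card_dvd (p := fun x => x ≠ 1) (fun c x hx => by simpa using hx) (by simp)
  have h1 : Nat.card N = Nat.card {x : N // x ≠ 1} + 1 := by
    classical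
    rw [Nat.card_congr (Equiv.sumCompl (fun x : N => x ≠ 1)).symm, Nat.card_sum]
    simp
  obtain ⟨c, hc⟩ := h
  rw [h1, hc]
  simp

variable [Finite N]

lemma exists_conj (hφ : IsFixedPointFree φ) {h : C} (hh : h ≠ 1) (k : N) :
    ∃ u : N, u * φ h u⁻¹ = k := by
  have hinj : Function.Injective fun u : N => u * φ h u⁻¹ := by
    intro u v huv
    simp only at huv
    have h1 : φ h (v⁻¹ * u) = v⁻¹ * u := by
      rw [map_inv, map_inv, mul_inv_eq_iff_eq_mul] at huv
      rw [map_mul, map_inv]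
      conv_rhs => rw [huv]
      group
    by_contra hne
    exact hφ h hh _ (fun h2 => hne (inv_mul_eq_one.mp h2).symm) h1
  exact (Finite.injective_iff_surjective.mp hinj) k

lemma orderOf_eq_orderOf_right (hφ : IsFixedPointFree φ) {x : N ⋊[φ] C} (hx : x.right ≠ 1) :
    orderOf x = orderOf x.right := by
  obtain ⟨u, hu⟩ := hφ.exists_conj hx x.left
  have : x = MulAut.conj (SemidirectProduct.inl u) (SemidirectProduct.inr x.right) := by
    rw [MulAut.conj_apply]
    ext <;> simp [← hu]
  rw [this, MulEquiv.orderOf_eq, orderOf_injective _ SemidirectProduct.inr_injective]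
  simp

variable [Finite C]

lemma orderCount_sdp (hφ : IsFixedPointFree φ) {n : ℕ} (hn : n ≠ 1) :
    orderCount (N ⋊[φ] C) n = orderCount N n + Nat.card N * orderCount C n := by
  have : Finite (N ⋊[φ] C) := Finite.of_equiv _ SemidirectProduct.equivProd.symm
  rw [orderCount_eq_add (SemidirectProduct.inl : N →* N ⋊[φ] C).range,
    ← orderCount_congr (MonoidHom.ofInjective (SemidirectProduct.inl_injective (φ := φ)))]
  congr 1
  rw [orderCount, ← Nat.card_prod]
  have hmem : ∀ x : N ⋊[φ] C, x ∉ (SemidirectProduct.inl : N →* N ⋊[φ] C).range ↔ x.right ≠ 1 := by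
    intro x
    rw [SemidirectProduct.range_inl_eq_ker_rightHom, MonoidHom.mem_ker]
    rfl
  refine Nat.card_congr
    { toFun := fun x => ⟨x.1.left, ⟨x.1.right, ?_⟩⟩
      invFun := fun p => ⟨⟨p.1, p.2.1⟩, ?_⟩
      left_inv := fun x => rfl
      right_inv := fun p => rfl }
  · rw [← hφ.orderOf_eq_orderOf_right ((hmem _).mp x.2.1), x.2.2]
  · have h1 : p.2.1 ≠ 1 := fun h => hn (by rw [← p.2.2, h, orderOf_one])
    exact ⟨(hmem _).mpr h1, by rw [hφ.orderOf_eq_orderOf_right h1]; exact p.2.2⟩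

lemma perfectOrderClasses_sdp_iff (hφ : IsFixedPointFree φ) :
    PerfectOrderClasses (N ⋊[φ] C) ↔ PerfectOrderClasses C ∧
      ∀ n, n ≠ 1 → orderCount N n = 0 ∨ orderCount N n ∣ Nat.card N * Nat.card C := by
  have hor : ∀ n, n ≠ 1 → orderCount N n = 0 ∨ orderCount C n = 0 := by
    intro n hn
    by_contra! hcon
    refine hn (Nat.eq_one_of_dvd_coprimes hφ.coprime (?_ : n ∣ Nat.card N) (?_ : n ∣ Nat.card C))
    · by_contra h
      exact hcon.1 (orderCount_eq_zero h)
    · by_contra h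
      exact hcon.2 (orderCount_eq_zero h)
  have hN : 0 < Nat.card N := Nat.card_pos
  constructor
  · intro h
    refine ⟨fun n hn => ?_, fun n hn => ?_⟩
    · by_cases hn1 : n = 1
      · right; rw [hn1, orderCount_one]; exact one_dvd _
      · rcases hor n hn1 with h1 | h1
        · have h2 := h n hn
          rw [hφ.orderCount_sdp hn1, h1, zero_add, SemidirectProduct.card] at h2
          exact h2.imp (fun h => (Nat.mul_eq_zero.mp h).resolve_left hN.ne')
            (Nat.dvd_of_mul_dvd_mul_left hN)
        · exact Or.inl h1
    · rcases hor n hn with h1 | h1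
      · exact Or.inl h1
      · rcases Nat.eq_zero_or_pos n with rfl | hn0
        · left
          refine orderCount_eq_zero fun h => ?_
          rw [zero_dvd_iff] at h
          omega
        · have h2 := h n hn0
          rwa [hφ.orderCount_sdp hn, h1, mul_zero, add_zero, SemidirectProduct.card] at h2
  · rintro ⟨h1, h2⟩ n hn
    by_cases hn1 : n = 1
    · right; rw [hn1, orderCount_one]; exact one_dvd _
    · rw [hφ.orderCount_sdp hn1, SemidirectProduct.card]
      rcases hor n hn1 with h | h
      · rw [h, zero_add]
        exact (h1 n hn).imp (fun h => by rw [h, mul_zero]) (mul_dvd_mul_left _)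
      · rw [h, mul_zero, add_zero]
        exact h2 n hn1

/-- The unique involution of a complement of even order inverts the kernel. -/
lemma exists_isUniqueInvolution (hφ : IsFixedPointFree φ) [Nontrivial N] (h2 : 2 ∣ Nat.card C) :
    (∃ z : C, IsUniqueInvolution z) ∧ ∀ x y : N, x * y = y * x := by
  have : Fact (Nat.Prime 2) := ⟨Nat.prime_two⟩
  have key : ∀ c : C, c ^ 2 = 1 → c ≠ 1 →
      MonoidHom.FixedPointFree (φ c) ∧ Function.Involutive (φ c) := by
    intro c hc hc1
    refine ⟨fun x hx => ?_, fun x => ?_⟩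
    · by_contra hx1
      exact hφ c hc1 x hx1 hx
    · rw [← MulAut.mul_apply, ← map_mul, ← pow_two, hc, map_one, MulAut.one_apply]
  obtain ⟨z, hz⟩ := exists_prime_orderOf_dvd_card' (G := C) 2 h2
  have hz2 : z ^ 2 = 1 := hz ▸ pow_orderOf_eq_one z
  have hz1 : z ≠ 1 := fun h => by rw [h, orderOf_one] at hz; omega
  obtain ⟨hzf, hzi⟩ := key z hz2 hz1
  refine ⟨⟨z, hz1, fun x => ⟨fun hx => ?_, ?_⟩⟩, hzf.commute_all_of_involutive hzi⟩
  · by_contra! hcon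
    obtain ⟨hxf, hxi⟩ := key x hx hcon.1
    obtain ⟨g, hg⟩ := exists_ne (1 : N)
    refine hcon.2 (hφ.injective_apply hg ?_)
    change φ x g = φ z g
    rw [hxf.coe_eq_inv_of_involutive hxi, hzf.coe_eq_inv_of_involutive hzi]
  · rintro (rfl | rfl)
    · exact one_pow 2
    · exact hz2

end IsFixedPointFree

lemma IsoFrobSdp.of_mulEquiv {G N' C' : Type*} [Group G] [Group N'] [Group C']
    {φ : C →* MulAut N} (hφ : IsFixedPointFree φ) (e : G ≃* N ⋊[φ] C) (eN : N ≃* N')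
    (eC : C ≃* C') : IsoFrobSdp G N' C' := by
  refine ⟨_, ?_, ⟨e.trans (SemidirectProduct.congr' eN eC)⟩⟩
  intro h hh x hx hfix
  refine hφ (eC.symm h) (by simpa using hh) (eN.symm x) (by simpa using hx) ?_
  have : eN (φ (eC.symm h) (eN.symm x)) = x := by simpa using hfix
  exact (MulEquiv.eq_symm_apply eN).mpr this

lemma IsFrobeniusWith.exists_sdp {G : Type*} [Group G] {K H : Subgroup G}
    (h : IsFrobeniusWith K H) :
    ∃ φ : H →* MulAut K, IsFixedPointFree φ ∧ Nonempty (G ≃* K ⋊[φ] H) := by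
  obtain ⟨-, -, hK, hdisj, hgen, hfree⟩ := h
  have hcompl : K.IsComplement' H := by
    refine Subgroup.isComplement'_of_disjoint_and_mul_eq_univ (disjoint_iff.mpr hdisj) ?_
    refine Set.eq_univ_of_forall fun g => ?_
    obtain ⟨k, hk, l, hl, rfl⟩ := hgen g
    exact Set.mul_mem_mul hk hl
  refine ⟨_, ?_, ⟨(SemidirectProduct.mulEquivSubgroup hcompl).symm⟩⟩
  intro l hl k hk hfix
  exact hfree l l.2 (by simpa using hl) k k.2 (by simpa using hk) (congrArg Subtype.val hfix)

end FixedPointFree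

/-! ### The kernel -/

section Kernel

variable {N : Type*} [CommGroup N]

lemma card_ker_powMonoidHom [Finite N] {p : ℕ} (hp : p.Prime) :
    Nat.card (powMonoidHom p : N →* N).ker = orderCount N p + 1 := by
  have h := orderCount_eq_add (powMonoidHom p : N →* N).ker p
  have hempty : IsEmpty {x : N // x ∉ (powMonoidHom p : N →* N).ker ∧ orderOf x = p} :=
    ⟨fun x => x.2.1 (MonoidHom.mem_ker.mpr (by
      have := pow_orderOf_eq_one x.1
      rwa [x.2.2] at this))⟩
  rw [Nat.card_of_isEmpty, add_zero] at h
  rw [h]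
  classical
  rw [Nat.card_congr (Equiv.sumCompl (fun x : (powMonoidHom p : N →* N).ker => orderOf x = p)).symm,
    Nat.card_sum]
  congr 1
  refine Nat.card_eq_one_iff_exists.mpr ⟨⟨1, by rw [orderOf_one]; exact hp.one_lt.ne⟩, ?_⟩
  rintro ⟨x, hx⟩
  refine Subtype.ext ?_
  by_contra hx1
  have : Fact p.Prime := ⟨hp⟩
  refine hx (orderOf_eq_prime (Subtype.ext ?_) hx1)
  exact MonoidHom.mem_ker.mp x.2

lemma exists_orderCount_add_one_eq [Finite N] {p : ℕ} [hp : Fact p.Prime] (hN : IsPGroup p N) :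
    ∃ r, orderCount N p + 1 = p ^ r := by
  rw [← card_ker_powMonoidHom hp.out]
  exact IsPGroup.iff_card.mp (hN.to_subgroup _)

lemma orderCount_mul_of_coprime {p q : ℕ} (hp : p.Prime) (hq : q.Prime)
    (hpq : p ≠ q) : orderCount N (p * q) = orderCount N p * orderCount N q := by
  have hcop : p.Coprime q := (Nat.coprime_primes hp hq).mpr hpq
  rw [orderCount, orderCount, orderCount, ← Nat.card_prod]
  symm
  have hp' : Fact p.Prime := ⟨hp⟩
  have hq' : Fact q.Prime := ⟨hq⟩
  refine Nat.card_eq_of_bijective (fun u : {x : N // orderOf x = p} × {x : N // orderOf x = q} =>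
    (⟨u.1.1 * u.2.1, by
      rw [(Commute.all _ _).orderOf_mul_eq_mul_orderOf_of_coprime
        (by rw [u.1.2, u.2.2]; exact hcop), u.1.2, u.2.2]⟩ : {x : N // orderOf x = p * q})) ⟨?_, ?_⟩
  · rintro ⟨⟨u, hu⟩, ⟨v, hv⟩⟩ ⟨⟨u', hu'⟩, ⟨v', hv'⟩⟩ h
    have h1 : u * v = u' * v' := congrArg Subtype.val h
    have h2 : u'⁻¹ * u = v' * v⁻¹ := by
      rw [inv_mul_eq_iff_eq_mul, ← mul_assoc, ← h1, mul_inv_cancel_right]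
    have h3 : (u'⁻¹ * u) ^ p = 1 := by
      have e1 : u ^ p = 1 := hu ▸ pow_orderOf_eq_one u
      have e2 : u' ^ p = 1 := hu' ▸ pow_orderOf_eq_one u'
      rw [mul_pow, inv_pow, e1, e2, inv_one, one_mul]
    have h4 : (u'⁻¹ * u) ^ q = 1 := by
      have e1 : v ^ q = 1 := hv ▸ pow_orderOf_eq_one v
      have e2 : v' ^ q = 1 := hv' ▸ pow_orderOf_eq_one v'
      rw [h2, mul_pow, inv_pow, e1, e2, inv_one, one_mul]
    have h5 : u'⁻¹ * u = 1 := orderOf_eq_one_iff.mp (Nat.eq_one_of_dvd_coprimes hcop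
      (orderOf_dvd_of_pow_eq_one h3) (orderOf_dvd_of_pow_eq_one h4))
    have h6 := h5
    rw [h2] at h6
    have e1 : u = u' := (inv_mul_eq_one.mp h5).symm
    have e2 : v = v' := (mul_inv_eq_one.mp h6).symm
    subst e1 e2
    rfl
  · rintro ⟨x, hx⟩
    have hp1 := hp.one_lt
    have hq1 := hq.one_lt
    have hbez : (p : ℤ) * p.gcdA q + q * p.gcdB q = 1 := by
      have := Nat.gcd_eq_gcd_ab p q
      rw [hcop.gcd_eq_one] at this
      exact_mod_cast this.symm
    have hxn : ∀ n : ℕ, 0 < n → n < p * q → x ^ n ≠ 1 := fun n hn hn' h => by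
      have := Nat.le_of_dvd hn (orderOf_dvd_of_pow_eq_one h)
      omega
    have hx1 : x ^ (p * q) = 1 := hx ▸ pow_orderOf_eq_one x
    have hsplit : x ^ (q * p.gcdB q) * x ^ (p * p.gcdA q) = x := by
      rw [← zpow_add, add_comm, hbez, zpow_one]
    have hA : (x ^ (p * p.gcdA q : ℤ)) ^ q = 1 := by
      rw [← zpow_natCast, ← zpow_mul, show (p * p.gcdA q : ℤ) * q = (p * q : ℕ) * p.gcdA q by
        push_cast; ring, zpow_mul, zpow_natCast, hx1, one_zpow]
    have hB : (x ^ (q * p.gcdB q : ℤ)) ^ p = 1 := by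
      rw [← zpow_natCast, ← zpow_mul, show (q * p.gcdB q : ℤ) * p = (p * q : ℕ) * p.gcdB q by
        push_cast; ring, zpow_mul, zpow_natCast, hx1, one_zpow]
    have hA1 : x ^ (p * p.gcdA q : ℤ) ≠ 1 := fun h => by
      rw [h, mul_one] at hsplit
      rw [hsplit] at hB
      exact hxn p hp.pos (lt_mul_of_one_lt_right hp.pos hq1) hB
    have hB1 : x ^ (q * p.gcdB q : ℤ) ≠ 1 := fun h => by
      rw [h, one_mul] at hsplit
      rw [hsplit] at hA
      exact hxn q hq.pos (lt_mul_of_one_lt_left hq.pos hp1) hA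
    exact ⟨⟨⟨_, orderOf_eq_prime hB hB1⟩, ⟨_, orderOf_eq_prime hA hA1⟩⟩, Subtype.ext hsplit⟩

/-- The homomorphism from `ZMod q` sending `1` to `x`. -/
noncomputable def zmodPowHom (q : ℕ) (x : N) (hx : x ^ q = 1) : Multiplicative (ZMod q) →* N :=
  AddMonoidHom.toMultiplicativeLeft (ZMod.lift q ⟨zmultiplesHom (Additive N) (Additive.ofMul x), by
    rw [zmultiplesHom_apply, natCast_zsmul, ← ofMul_pow, hx, ofMul_one]⟩)

lemma zmodPowHom_intCast (q : ℕ) (x : N) (hx : x ^ q = 1) (i : ℤ) :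
    zmodPowHom q x hx (Multiplicative.ofAdd (i : ZMod q)) = x ^ i := by
  simp [zmodPowHom]

/-- An abelian group generated by two independent elements of order `q`. -/
lemma nonempty_mulEquiv_fin_two (q : ℕ) {x y : N} (hx : x ^ q = 1) (hy : y ^ q = 1)
    (hgen : ∀ g : N, ∃ i j : ℤ, g = x ^ i * y ^ j)
    (hind : ∀ i j : ℤ, x ^ i * y ^ j = 1 → (q : ℤ) ∣ i ∧ (q : ℤ) ∣ j) :
    Nonempty (N ≃* (Fin 2 → Multiplicative (ZMod q))) := by
  let F : (Fin 2 → Multiplicative (ZMod q)) →* N :=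
    ((zmodPowHom q x hx).comp (Pi.evalMonoidHom _ 0)) *
      ((zmodPowHom q y hy).comp (Pi.evalMonoidHom _ 1))
  have hF : ∀ i j : ℤ, F ![Multiplicative.ofAdd (i : ZMod q), Multiplicative.ofAdd (j : ZMod q)] =
      x ^ i * y ^ j := by
    intro i j
    rw [← zmodPowHom_intCast q x hx, ← zmodPowHom_intCast q y hy]
    rfl
  have hrep : ∀ g : Fin 2 → Multiplicative (ZMod q), ∃ i j : ℤ,
      g = ![Multiplicative.ofAdd (i : ZMod q), Multiplicative.ofAdd (j : ZMod q)] := by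
    intro g
    obtain ⟨i, hi⟩ := ZMod.intCast_surjective (Multiplicative.toAdd (g 0))
    obtain ⟨j, hj⟩ := ZMod.intCast_surjective (Multiplicative.toAdd (g 1))
    refine ⟨i, j, ?_⟩
    funext t
    fin_cases t
    · simp [hi]
    · simp [hj]
  refine ⟨(MulEquiv.ofBijective F ⟨?_, fun g => ?_⟩).symm⟩
  · rw [injective_iff_map_eq_one]
    intro g hg
    obtain ⟨i, j, rfl⟩ := hrep g
    rw [hF] at hg
    obtain ⟨h1, h2⟩ := hind i j hg
    funext t
    fin_cases t
    · simpa using (ZMod.intCast_zmod_eq_zero_iff_dvd i q).mpr h1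
    · simpa using (ZMod.intCast_zmod_eq_zero_iff_dvd j q).mpr h2
  · obtain ⟨i, j, rfl⟩ := hgen g
    exact ⟨_, hF i j⟩

/-- An abelian `p`-group of rank two whose automorphisms permute the elements of order `p`
transitively is homocyclic. -/
lemma exists_mulEquiv_of_transitive [Finite N] {p : ℕ} [hp : Fact p.Prime] (hN : IsPGroup p N)
    (hV : orderCount N p + 1 = p ^ 2)
    (htrans : ∀ x y : N, orderOf x = p → orderOf y = p → ∃ e : MulAut N, e x = y) :
    ∃ k, 0 < k ∧ Nonempty (N ≃* (Fin 2 → Multiplicative (ZMod (p ^ k)))) := by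
  have hp1 := hp.out.one_lt
  obtain ⟨g, hg⟩ := Monoid.exists_orderOf_eq_exponent (Monoid.ExponentExists.of_finite (G := N))
  obtain ⟨k, hk⟩ := IsPGroup.iff_orderOf.mp hN g
  have hexp : ∀ x : N, x ^ p ^ k = 1 := fun x => by
    rw [← hk, hg]; exact Monoid.pow_exponent_eq_one x
  obtain ⟨v, hv⟩ : ∃ v : N, orderOf v = p := by
    by_contra! hcon
    have : orderCount N p = 0 := by
      have : IsEmpty {x : N // orderOf x = p} := ⟨fun x => hcon x x.2⟩
      exact Nat.card_of_isEmpty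
    rw [this] at hV
    have := Nat.one_lt_pow two_ne_zero hp1
    omega
  have hk0 : 0 < k := by
    rcases Nat.eq_zero_or_pos k with rfl | h
    · have := hexp v
      rw [pow_zero, pow_one] at this
      rw [this, orderOf_one] at hv
      omega
    · exact h
  refine ⟨k, hk0, ?_⟩
  have hgp : orderOf (g ^ p ^ (k - 1)) = p := by
    have hkk : p ^ k = p ^ (k - 1) * p := by rw [← pow_succ]; congr 1; omega
    have hpos : 0 < p ^ (k - 1) := by positivity
    rw [orderOf_pow_of_dvd hpos.ne' (by rw [hk, hkk]; exact dvd_mul_right _ _), hk, hkk,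
      Nat.mul_div_cancel_left _ hpos]
  have hroot : ∀ w : N, orderOf w = p → ∃ x : N, x ^ p ^ (k - 1) = w := fun w hw => by
    obtain ⟨e, he⟩ := htrans _ w hgp hw
    exact ⟨e g, by rw [← map_pow, he]⟩
  set V := (powMonoidHom p : N →* N).ker with hVdef
  have hVcard : Nat.card V = p ^ 2 := by rw [card_ker_powMonoidHom hp.out, hV]
  have hmemV : ∀ x : N, x ∈ V ↔ x ^ p = 1 := fun x => MonoidHom.mem_ker
  have hvV : v ∈ V := (hmemV v).mpr (hv ▸ pow_orderOf_eq_one v)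
  obtain ⟨w, hwV, hwv⟩ : ∃ w ∈ V, w ∉ Subgroup.zpowers v := by
    by_contra! hcon
    have := Subgroup.card_le_of_le (show V ≤ Subgroup.zpowers v from hcon)
    rw [hVcard, Nat.card_zpowers, hv] at this
    nlinarith
  have hw : orderOf w = p := orderOf_eq_prime ((hmemV w).mp hwV) fun h => hwv (h ▸ one_mem _)
  have hsup : Subgroup.zpowers v ⊔ Subgroup.zpowers w = V := by
    have hle : Subgroup.zpowers v ⊔ Subgroup.zpowers w ≤ V :=
      sup_le (Subgroup.zpowers_le.mpr hvV) (Subgroup.zpowers_le.mpr hwV)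
    refine Subgroup.eq_of_le_of_card_ge hle ?_
    have h1 := Subgroup.card_dvd_of_le hle
    rw [hVcard] at h1
    obtain ⟨j, hj, hj'⟩ := (Nat.dvd_prime_pow hp.out).mp h1
    have hlt : Nat.card (Subgroup.zpowers v) <
        Nat.card ↑(Subgroup.zpowers v ⊔ Subgroup.zpowers w) := by
      by_contra hcon
      have := Subgroup.eq_of_le_of_card_ge
        (le_sup_left : Subgroup.zpowers v ≤ Subgroup.zpowers v ⊔ Subgroup.zpowers w)
        (not_lt.mp hcon)
      exact hwv (this ▸ (le_sup_right : _ ≤ Subgroup.zpowers v ⊔ Subgroup.zpowers w)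
        (Subgroup.mem_zpowers w))
    rw [hj', Nat.card_zpowers, hv] at hlt
    have hj2 : 1 < j := by
      rw [← Nat.pow_lt_pow_iff_right hp1, pow_one]; exact hlt
    rw [hVcard, hj', show j = 2 by omega]
  obtain ⟨x, hx⟩ := hroot v hv
  obtain ⟨y, hy⟩ := hroot w hw
  have hind : ∀ i j : ℤ, v ^ i * w ^ j = 1 → (p : ℤ) ∣ i ∧ (p : ℤ) ∣ j := by
    intro i j hij
    have hj : (p : ℤ) ∣ j := by
      by_contra hj
      have hcop : IsCoprime (p : ℤ) j :=
        (Nat.prime_iff_prime_int.mp hp.out).coprime_iff_not_dvd.mpr hj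
      obtain ⟨s, t, hst⟩ := hcop
      have hwj : w ^ j ∈ Subgroup.zpowers v := by
        rw [← inv_eq_of_mul_eq_one_right hij]
        exact inv_mem (Subgroup.zpow_mem _ (Subgroup.mem_zpowers v) i)
      refine hwv ?_
      have : w = (w ^ j) ^ t := by
        conv_lhs => rw [← zpow_one w, ← hst, zpow_add, mul_comm s, zpow_mul, zpow_natCast,
          (hmemV w).mp hwV, one_zpow, one_mul, mul_comm t, zpow_mul]
      rw [this]
      exact Subgroup.zpow_mem _ hwj t
    refine ⟨?_, hj⟩
    have hwj : w ^ j = 1 := orderOf_dvd_iff_zpow_eq_one.mp (by rw [hw]; exact hj)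
    rw [hwj, mul_one] at hij
    rw [← hv]
    exact orderOf_dvd_iff_zpow_eq_one.mpr hij
  refine nonempty_mulEquiv_fin_two (p ^ k) (hexp x) (hexp y) (fun g => ?_) (fun i j hij => ?_)
  · have key : ∀ l, l ≤ k → ∀ g : N, g ^ p ^ l = 1 → ∃ i j : ℤ, g = x ^ i * y ^ j := by
      intro l
      induction l with
      | zero => exact fun _ g hg => ⟨0, 0, by simpa using hg⟩
      | succ l ih =>
        intro hl g hg
        have hgV : g ^ p ^ l ∈ V := (hmemV _).mpr (by rw [← pow_mul, ← pow_succ]; exact hg)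
        rw [← hsup, Subgroup.mem_sup] at hgV
        obtain ⟨_, ⟨a, rfl⟩, _, ⟨b, rfl⟩, hab⟩ := hgV
        simp only at hab
        have hroot' : ∀ (r s : N) (c : ℤ), r ^ p ^ (k - 1) = s →
            (r ^ ((p : ℤ) ^ (k - 1 - l) * c)) ^ p ^ l = s ^ c := by
          intro r s c hrs
          rw [← hrs, ← zpow_natCast, ← zpow_natCast, ← zpow_mul, ← zpow_mul]
          congr 1
          have : p ^ (k - 1) = p ^ (k - 1 - l) * p ^ l := by rw [← pow_add]; congr 1; omega
          rw [this]
          push_cast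
          ring
        set t := x ^ ((p : ℤ) ^ (k - 1 - l) * a) * y ^ ((p : ℤ) ^ (k - 1 - l) * b) with ht
        have htp : t ^ p ^ l = g ^ p ^ l := by
          rw [ht, mul_pow, hroot' x v a hx, hroot' y w b hy, hab]
        obtain ⟨i, j, hij⟩ := ih (by omega) (g * t⁻¹) (by
          rw [mul_pow, inv_pow, htp, mul_inv_cancel])
        refine ⟨i + (p : ℤ) ^ (k - 1 - l) * a, j + (p : ℤ) ^ (k - 1 - l) * b, ?_⟩
        rw [mul_inv_eq_iff_eq_mul] at hij
        rw [hij, ht, zpow_add, zpow_add, mul_mul_mul_comm]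
    exact key k le_rfl g (hexp g)
  · have key : ∀ l, l ≤ k → (p : ℤ) ^ l ∣ i ∧ (p : ℤ) ^ l ∣ j := by
      intro l
      induction l with
      | zero => simp
      | succ l ih =>
        intro hl
        obtain ⟨⟨a, ha⟩, ⟨b, hb⟩⟩ := ih (by omega)
        have hroot' : ∀ (r s : N) (c d : ℤ), r ^ p ^ (k - 1) = s → d = (p : ℤ) ^ l * c →
            (r ^ d) ^ p ^ (k - 1 - l) = s ^ c := by
          intro r s c d hrs hd
          rw [← hrs, hd, ← zpow_natCast, ← zpow_natCast, ← zpow_mul, ← zpow_mul]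
          congr 1
          have : p ^ (k - 1) = p ^ (k - 1 - l) * p ^ l := by rw [← pow_add]; congr 1; omega
          rw [this]
          push_cast
          ring
        have h1 := congrArg (· ^ p ^ (k - 1 - l)) hij
        simp only [mul_pow, one_pow] at h1
        rw [hroot' x v a i hx ha, hroot' y w b j hy hb] at h1
        obtain ⟨h2, h3⟩ := hind a b h1
        rw [ha, hb, pow_succ]
        exact ⟨mul_dvd_mul_left _ h2, mul_dvd_mul_left _ h3⟩
    have := key k le_rfl
    push_cast
    exact this

end Kernel

/-! ### The classification -/

lemma orderCount_pos_of_dvd {Γ : Type*} [Group Γ] [Finite Γ] {p : ℕ} (hp : p.Prime)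
    (h : p ∣ Nat.card Γ) : 0 < orderCount Γ p := by
  have : Fact p.Prime := ⟨hp⟩
  obtain ⟨x, hx⟩ := exists_prime_orderOf_dvd_card' p h
  have : Nonempty {g : Γ // orderOf g = p} := ⟨⟨x, hx⟩⟩
  exact Nat.card_pos

section Classification

variable {N C : Type*} [CommGroup N] [Group C] {φ : C →* MulAut N}

namespace IsFixedPointFree

lemma mul_mul_eq_one_of_pow_three (hφ : IsFixedPointFree φ) {c : C} (hc : c ^ 3 = 1)
    (hc1 : c ≠ 1) (g : N) : g * φ c g * φ (c ^ 2) g = 1 := by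
  by_contra hne
  refine hc1 (hφ.eq_one hne ?_)
  have h3 : φ c (φ (c ^ 2) g) = g := by
    rw [← MulAut.mul_apply, ← map_mul, ← pow_succ', hc, map_one, MulAut.one_apply]
  have h2 : φ c (φ c g) = φ (c ^ 2) g := by
    rw [← MulAut.mul_apply, ← map_mul, ← sq]
  rw [map_mul, map_mul, h2, h3, mul_comm, mul_assoc]

lemma eq_sq_of_commute [Nontrivial N] (hφ : IsFixedPointFree φ) {x y : C} (hx : x ^ 3 = 1)
    (hx1 : x ≠ 1) (hy : y ^ 3 = 1) (hy1 : y ≠ 1) (hxy : x * y = y * x) (hne : y ≠ x) :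
    y = x ^ 2 := by
  obtain ⟨g, hg⟩ := exists_ne (1 : N)
  refine hφ.injective_apply hg ?_
  change φ y g = φ (x ^ 2) g
  rw [← mul_inv_eq_one]
  by_contra hg'
  refine hne (inv_mul_eq_one.mp (hφ.eq_one hg' ?_)).symm
  refine (φ x).injective ?_
  rw [← MulAut.mul_apply, ← map_mul, mul_inv_cancel_left]
  have e1 : φ y (φ y g) = φ (y ^ 2) g := by rw [sq, map_mul, MulAut.mul_apply]
  have e2 : φ x (φ (x ^ 2) g) = g := by
    rw [← MulAut.mul_apply, ← map_mul, ← pow_succ', hx, map_one, MulAut.one_apply]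
  have e3 : φ y (φ (x ^ 2) g) = φ (x ^ 2) (φ y g) := by
    rw [← MulAut.mul_apply, ← MulAut.mul_apply, ← map_mul, ← map_mul,
      ((show Commute x y from hxy).pow_left 2).eq]
  have e4 := hφ.mul_mul_eq_one_of_pow_three hx hx1 (φ y g)
  have e5 := hφ.mul_mul_eq_one_of_pow_three hy hy1 g
  rw [map_mul, map_mul, map_inv, map_inv, e1, e2, e3, eq_inv_of_mul_eq_one_right e4,
    eq_inv_of_mul_eq_one_right e5, inv_inv, mul_inv, mul_assoc, inv_mul_cancel_left, mul_comm]

lemma isCyclic_of_card_eq_nine [Nontrivial N] (hφ : IsFixedPointFree φ) (P : Subgroup C)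
    (hP : Nat.card P = 3 ^ 2) : IsCyclic P := by
  have : Fact (Nat.Prime 3) := ⟨Nat.prime_three⟩
  by_contra hcyc
  have hexp := (not_isCyclic_iff_exponent_eq_prime Nat.prime_three hP).mp hcyc
  have hpow : ∀ x : P, x ^ 3 = 1 := fun x => by rw [← hexp, Monoid.pow_exponent_eq_one]
  have hcomm := (IsPGroup.isMulCommutative_of_card_eq_prime_sq hP)
  have : Finite P := Nat.finite_of_card_ne_zero (by rw [hP]; norm_num)
  have : Nontrivial P := Finite.one_lt_card_iff_nontrivial.mp (by rw [hP]; norm_num)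
  obtain ⟨x, hx⟩ := exists_ne (1 : P)
  obtain ⟨y, hy⟩ : ∃ y : P, y ∉ Subgroup.zpowers x := by
    by_contra! hall
    have h1 : Nat.card (Subgroup.zpowers x) = Nat.card P := by
      rw [(Subgroup.eq_top_iff' _).mpr hall, Subgroup.card_top]
    rw [Nat.card_zpowers, orderOf_eq_prime (hpow x) hx, hP] at h1
    norm_num at h1
  have hcoe : ∀ z : P, (z : C) ^ 3 = 1 := fun z => by
    rw [← Subgroup.coe_pow, hpow z, Subgroup.coe_one]
  have h1 := hφ.eq_sq_of_commute (hcoe x) (fun h => hx (Subtype.ext h)) (hcoe y)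
    (fun h => hy (by rw [show y = 1 from Subtype.ext h]; exact one_mem _))
    (congrArg Subtype.val (hcomm.is_comm.comm x y))
    (fun h => hy (by rw [show y = x from Subtype.ext h]; exact Subgroup.mem_zpowers x))
  refine hy ?_
  rw [show y = x ^ 2 from Subtype.ext h1]
  exact pow_mem (Subgroup.mem_zpowers x) 2

variable [Finite N]

lemma isNilpotent_of_orderCount_add_one_eq (hφ : IsFixedPointFree φ) {p : ℕ} (hp : p.Prime)
    (hpN : p ∣ Nat.card N) (h : orderCount N p + 1 = p) : Group.IsNilpotent C := by
  have : Fact p.Prime := ⟨hp⟩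
  obtain ⟨v, hv⟩ := exists_prime_orderOf_dvd_card' p hpN
  have hv1 : v ≠ 1 := by
    rintro rfl
    rw [orderOf_one] at hv
    exact hp.ne_one hv.symm
  have hle : Subgroup.zpowers v ≤ (powMonoidHom p : N →* N).ker := by
    rw [Subgroup.zpowers_le, MonoidHom.mem_ker, powMonoidHom_apply, ← hv, pow_orderOf_eq_one]
  have heq := Subgroup.eq_of_le_of_card_ge hle (by
    rw [card_ker_powMonoidHom hp, h, Nat.card_zpowers, hv])
  have hpow : ∀ c : C, ∃ i : ℤ, v ^ i = φ c v := fun c => by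
    rw [← Subgroup.mem_zpowers_iff, heq, MonoidHom.mem_ker, powMonoidHom_apply, ← map_pow, ← hv,
      pow_orderOf_eq_one, map_one]
  have hcomm : ∀ c d : C, c * d = d * c := fun c d => by
    obtain ⟨i, hi⟩ := hpow c
    obtain ⟨j, hj⟩ := hpow d
    refine hφ.injective_apply hv1 ?_
    simp only [map_mul, MulAut.mul_apply]
    rw [← hi, ← hj, map_zpow, map_zpow, ← hi, ← hj, ← zpow_mul, ← zpow_mul, mul_comm]
  let _ : CommGroup C := { ‹Group C› with mul_comm := hcomm }
  exact CommGroup.isNilpotent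

variable [Finite C]

lemma isPGroup (hφ : IsFixedPointFree φ) (hC : 1 < Nat.card C)
    (h : ∀ n, n ≠ 1 → orderCount N n = 0 ∨ orderCount N n ∣ Nat.card N * Nat.card C)
    {p : ℕ} (hp : p.Prime) (hpN : p ∣ Nat.card N) : IsPGroup p N := by
  refine IsPGroup.of_card (n := _) (Nat.eq_prime_pow_of_unique_prime_dvd Nat.card_pos.ne' ?_)
  intro q hq hqN
  by_contra hqp
  have hpq := orderCount_mul_of_coprime (N := N) hp hq (Ne.symm hqp)
  have hp0 := orderCount_pos_of_dvd hp hpN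
  have hq0 := orderCount_pos_of_dvd hq hqN
  rcases h (p * q) (fun h1 => hp.ne_one (Nat.eq_one_of_mul_eq_one_right h1)) with h0 | hdvd
  · rw [hpq] at h0
    exact (Nat.mul_pos hp0 hq0).ne' h0
  · rw [hpq] at hdvd
    have h1 := (mul_dvd_mul (hφ.card_dvd_orderCount hp.ne_one)
      (hφ.card_dvd_orderCount hq.ne_one)).trans hdvd
    have h2 : Nat.card C ∣ Nat.card N := Nat.dvd_of_mul_dvd_mul_right Nat.card_pos h1
    have h3 := Nat.Coprime.eq_one_of_dvd hφ.coprime.symm h2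
    omega

lemma card_eq_orderCount (hφ : IsFixedPointFree φ)
    (h : ∀ n, n ≠ 1 → orderCount N n = 0 ∨ orderCount N n ∣ Nat.card N * Nat.card C)
    {p : ℕ} (hp : p.Prime) (hpN : p ∣ Nat.card N) (hN : IsPGroup p N) :
    orderCount N p = Nat.card C := by
  have : Fact p.Prime := ⟨hp⟩
  have hp0 := orderCount_pos_of_dvd hp hpN
  obtain ⟨r, hr⟩ := exists_orderCount_add_one_eq hN
  obtain ⟨c, hc⟩ := hφ.card_dvd_orderCount (n := p) hp.ne_one
  have hdvd := (h p hp.ne_one).resolve_left hp0.ne'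
  rw [hc, mul_comm (Nat.card N)] at hdvd
  have hcN : c ∣ Nat.card N := Nat.dvd_of_mul_dvd_mul_left Nat.card_pos hdvd
  obtain ⟨m, hm⟩ := IsPGroup.iff_card.mp hN
  rw [hm] at hcN
  obtain ⟨j, -, rfl⟩ := (Nat.dvd_prime_pow hp).mp hcN
  rcases Nat.eq_zero_or_pos j with rfl | hj
  · rw [hc, pow_zero, mul_one]
  · exfalso
    have h1 : p ∣ orderCount N p := by
      rw [hc]
      exact Dvd.dvd.mul_left (dvd_pow_self p hj.ne') _
    have hr0 : r ≠ 0 := by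
      rintro rfl
      rw [pow_zero] at hr
      omega
    have h2 : p ∣ orderCount N p + 1 := hr ▸ dvd_pow_self p hr0
    exact hp.one_lt.ne' (Nat.dvd_one.mp ((Nat.dvd_add_right h1).mp h2))

lemma exists_orderOf_eq_sixteen (hφ : IsFixedPointFree φ) (hN : 17 ∣ Nat.card N)
    (hcard : orderCount N 17 = Nat.card C) : ∃ c : C, orderOf c = 16 := by
  have : Fact (Nat.Prime 17) := ⟨by norm_num⟩
  have : Fact (Nat.Prime 2) := ⟨Nat.prime_two⟩
  obtain ⟨v, hv⟩ := exists_prime_orderOf_dvd_card' 17 hN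
  have hv1 : v ≠ 1 := by
    rintro rfl
    rw [orderOf_one] at hv
    omega
  obtain ⟨c, hc⟩ := hφ.transitive (n := 17) (by norm_num) hcard hv
    (y := v ^ 3) (by rw [orderOf_pow, hv]; rfl)
  have hpow : ∀ n : ℕ, φ (c ^ n) v = v ^ 3 ^ n := fun n => by
    induction n with
    | zero => simp
    | succ n ih => rw [pow_succ, map_mul, MulAut.mul_apply, hc, map_pow, ih, ← pow_mul, pow_succ]
  refine ⟨c, orderOf_eq_prime_pow (p := 2) (n := 3) ?_ ?_⟩
  · intro h
    have h1 := hpow (2 ^ 3)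
    rw [h, map_one, MulAut.one_apply, ← pow_mod_orderOf, hv] at h1
    have h2 : v ^ 1 = v ^ 16 := by simpa using h1
    have h3 := pow_injOn_Iio_orderOf (x := v) (by simp [hv]) (by simp [hv]) h2
    omega
  · refine hφ.eq_one hv1 ?_
    rw [hpow, ← pow_mod_orderOf, hv]
    norm_num

theorem classification [Nontrivial N] (hφ : IsFixedPointFree φ)
    (hpoc : PerfectOrderClasses (N ⋊[φ] C)) (hnil : ¬ Group.IsNilpotent C)
    (hdiv : ∀ p : ℕ, p.Prime → p ∣ Nat.card C → p = 2 ∨ p = 3)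
    (h2 : 2 ∣ Nat.card C) (h3 : 3 ∣ Nat.card C) :
    ∃ k : ℕ, 0 < k ∧
      (Nonempty (N ≃* (Fin 2 → Multiplicative (ZMod (5 ^ k)))) ∧
          (Nonempty (C ≃* Matrix.SpecialLinearGroup (Fin 2) (ZMod 3)) ∨
            Nonempty (C ≃* Metacyclic 3 8 (-1))) ∨
        Nonempty (N ≃* (Fin 2 → Multiplicative (ZMod (7 ^ k)))) ∧
          Nonempty (C ≃* Metacyclic 3 16 (-1)) ∨
        Nonempty (N ≃* (Fin 2 → Multiplicative (ZMod (17 ^ k)))) ∧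
          Nonempty (C ≃* Metacyclic 9 32 (-1))) := by
  obtain ⟨hpocC, hN⟩ := hφ.perfectOrderClasses_sdp_iff.mp hpoc
  obtain ⟨⟨z, hz⟩, -⟩ := hφ.exists_isUniqueInvolution h2
  obtain ⟨p, hp, hpN⟩ := Nat.exists_prime_and_dvd (Finite.one_lt_card (α := N)).ne'
  have hp' : Fact p.Prime := ⟨hp⟩
  have hC1 : 1 < Nat.card C := Nat.lt_of_lt_of_le one_lt_two (Nat.le_of_dvd Nat.card_pos h2)
  have hpN' : IsPGroup p N := hφ.isPGroup hC1 hN hp hpN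
  have hcard := hφ.card_eq_orderCount hN hp hpN hpN'
  obtain ⟨r, hr⟩ := exists_orderCount_add_one_eq hpN'
  have hcop : ∀ q, q ∣ Nat.card C → p = q → False := by
    rintro q hq rfl
    exact hp.ne_one (Nat.eq_one_of_dvd_coprimes hφ.coprime hpN hq)
  have hp5 : 5 ≤ p := by
    by_contra! hlt
    interval_cases p
    · exact hp.ne_zero rfl
    · exact hp.ne_one rfl
    · exact hcop 2 h2 rfl
    · exact hcop 3 h3 rfl
    · norm_num at hp
  have hr2 : 2 ≤ r := by
    by_contra! hlt
    interval_cases r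
    · rw [pow_zero] at hr
      omega
    · rw [pow_one] at hr
      exact hnil (hφ.isNilpotent_of_orderCount_add_one_eq hp hpN hr)
  have hCcard : Nat.card C = p ^ r - 1 := by omega
  obtain ⟨rfl, hp3⟩ := smooth_prime_pow_sub_one hp hp5 hr2 (by rwa [← hCcard])
  obtain ⟨k, hk, hiso⟩ := exists_mulEquiv_of_transitive hpN' hr fun x y hx hy => by
    obtain ⟨c, hc⟩ := hφ.transitive hp.ne_one hcard hx hy
    exact ⟨φ c, hc⟩
  refine ⟨k, hk, ?_⟩
  rcases hp3 with rfl | rfl | rfl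
  · exact Or.inl ⟨hiso, nonempty_mulEquiv_of_card_eq_24 hz hCcard hpocC hnil⟩
  · exact Or.inr (Or.inl ⟨hiso, nonempty_mulEquiv_of_card_eq_48 hz hCcard hpocC hnil⟩)
  · obtain ⟨y, hy⟩ := hφ.exists_orderOf_eq_sixteen hpN hcard
    exact Or.inr (Or.inr ⟨hiso, nonempty_mulEquiv_of_card_eq_288 hz hCcard hpocC hnil hy
      hφ.isCyclic_of_card_eq_nine⟩)

end IsFixedPointFree

end Classification

/-! ### The converse -/

section Converse

lemma orderCount_prime_pow_succ_add (Γ : Type*) [Group Γ] [Finite Γ] {p : ℕ} (hp : p.Prime)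
    (j : ℕ) : orderCount Γ (p ^ (j + 1)) + Nat.card {x : Γ // x ^ p ^ j = 1} =
      Nat.card {x : Γ // x ^ p ^ (j + 1) = 1} := by
  classical
  have : Fact p.Prime := ⟨hp⟩
  rw [add_comm, orderCount, ← Nat.card_sum]
  have hpos : 0 < p ^ j := Nat.pow_pos hp.pos
  have hdisj : Disjoint (fun x : Γ => x ^ p ^ j = 1) (fun x => orderOf x = p ^ (j + 1)) := by
    rw [Pi.disjoint_iff]
    intro x
    rw [Prop.disjoint_iff]
    rintro ⟨h1, h2⟩
    have h3 := Nat.le_of_dvd hpos (orderOf_dvd_of_pow_eq_one h1)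
    rw [h2] at h3
    exact absurd h3 (not_le.mpr (Nat.pow_lt_pow_right hp.one_lt (Nat.lt_succ_self j)))
  refine Nat.card_congr ((subtypeOrEquiv _ _ hdisj).symm.trans
    (Equiv.subtypeEquivRight fun x => ?_))
  constructor
  · rintro (h | h)
    · rw [pow_succ, pow_mul, h, one_pow]
    · rw [← h, pow_orderOf_eq_one]
  · intro h
    by_cases h1 : x ^ p ^ j = 1
    · exact Or.inl h1
    · exact Or.inr (orderOf_eq_prime_pow h1 h)

lemma card_pow_eq_one_fin_two (A : Type*) [CommGroup A] [IsCyclic A] [Finite A] (n : ℕ) :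
    Nat.card {x : Fin 2 → A // x ^ n = 1} = (Nat.card A).gcd n ^ 2 := by
  rw [← IsCyclic.card_powMonoidHom_ker A n, sq, ← Nat.card_prod]
  refine Nat.card_congr (((piFinTwoEquiv fun _ => A).subtypeEquiv fun x => ?_).trans
    Equiv.subtypeProdEquivProd)
  simp [funext_iff, Fin.forall_fin_two, MonoidHom.mem_ker]

lemma orderCount_fin_two_dvd {p k n : ℕ} (hp : p.Prime) (hn : n ≠ 1) :
    orderCount (Fin 2 → Multiplicative (ZMod (p ^ k))) n = 0 ∨
      orderCount (Fin 2 → Multiplicative (ZMod (p ^ k))) n ∣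
        Nat.card (Fin 2 → Multiplicative (ZMod (p ^ k))) * (p ^ 2 - 1) := by
  have : NeZero (p ^ k) := ⟨(Nat.pow_pos hp.pos).ne'⟩
  have hA : Nat.card (Multiplicative (ZMod (p ^ k))) = p ^ k := by
    rw [Nat.card_congr Multiplicative.toAdd, Nat.card_zmod]
  have hcard : Nat.card (Fin 2 → Multiplicative (ZMod (p ^ k))) = p ^ (2 * k) := by
    rw [Nat.card_fun, hA, Nat.card_fin, ← pow_mul, mul_comm]
  by_cases hdvd : n ∣ Nat.card (Fin 2 → Multiplicative (ZMod (p ^ k)))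
  swap
  · exact Or.inl (orderCount_eq_zero hdvd)
  rw [hcard] at hdvd
  obtain ⟨i, -, rfl⟩ := (Nat.dvd_prime_pow hp).mp hdvd
  obtain ⟨j, rfl⟩ := Nat.exists_eq_succ_of_ne_zero (n := i) (by rintro rfl; exact hn (pow_zero p))
  have h := orderCount_prime_pow_succ_add (Fin 2 → Multiplicative (ZMod (p ^ k))) hp j
  rw [card_pow_eq_one_fin_two, card_pow_eq_one_fin_two, hA] at h
  rcases le_or_gt k j with hkj | hjk
  · left
    rw [Nat.gcd_eq_left (pow_dvd_pow p hkj), Nat.gcd_eq_left (pow_dvd_pow p (by omega))] at h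
    simpa using h
  · right
    rw [Nat.gcd_eq_right (pow_dvd_pow p hjk.le),
      Nat.gcd_eq_right (pow_dvd_pow p (Nat.succ_le_of_lt hjk)), Nat.succ_eq_add_one] at h
    have h1 : orderCount (Fin 2 → Multiplicative (ZMod (p ^ k))) (p ^ (j + 1)) =
        p ^ (2 * j) * (p ^ 2 - 1) := by
      rw [Nat.eq_sub_of_add_eq h, Nat.mul_sub, ← pow_mul, ← pow_mul, ← pow_add]
      ring_nf
    rw [Nat.succ_eq_add_one, h1, hcard]
    exact mul_dvd_mul_right (pow_dvd_pow p (by omega)) _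

lemma IsoFrobSdp.perfectOrderClasses {G C : Type*} [Group G] [Group C] [Finite C] {p k : ℕ}
    (hp : p.Prime) (h : IsoFrobSdp G (Fin 2 → Multiplicative (ZMod (p ^ k))) C)
    (hC : PerfectOrderClasses C) (hcard : Nat.card C = p ^ 2 - 1) : PerfectOrderClasses G := by
  have : NeZero (p ^ k) := ⟨(Nat.pow_pos hp.pos).ne'⟩
  obtain ⟨φ, hφ, ⟨e⟩⟩ := h
  refine PerfectOrderClasses.congr e.symm ?_
  refine (IsFixedPointFree.perfectOrderClasses_sdp_iff (φ := φ) hφ).mpr ⟨hC, fun n hn => ?_⟩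
  rw [hcard]
  exact orderCount_fin_two_dvd hp hn

lemma IsoFrobSdp.perfectOrderClasses_of_metacyclic {G : Type*} [Group G] {p k m l : ℕ}
    (hp : p.Prime) (hm : Odd m) (hl : 2 ≤ l) (hcard : m * 2 ^ l = p ^ 2 - 1)
    (hφ : ∀ d ∈ (m * 2 ^ (l - 1)).divisors, d.totient ∣ m * 2 ^ l)
    (h : IsoFrobSdp G (Fin 2 → Multiplicative (ZMod (p ^ k))) (Metacyclic m (2 ^ l) (-1))) :
    PerfectOrderClasses G := by
  have hl0 : l ≠ 0 := by omega
  have : Finite (Metacyclic m (2 ^ l) (-1)) :=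
    (Metacyclic.finite_and_card_le hm.pos (Nat.two_pow_pos l)).1
  refine h.perfectOrderClasses hp (Metacyclic.perfectOrderClasses hm hl fun d hd =>
    hφ d (Nat.mem_divisors.mpr ⟨hd, (Nat.mul_pos hm.pos (Nat.two_pow_pos _)).ne'⟩)) ?_
  rw [← hcard, Metacyclic.card_eq hm.pos (Nat.two_pow_pos l) (even_two.pow_of_ne_zero hl0)
    (hm.coprime_two_right.pow_right l)]

end Converse

lemma two_dvd_and_three_dvd_of_not_isNilpotent {Γ : Type*} [Group Γ] [Finite Γ]
    (hnil : ¬ Group.IsNilpotent Γ)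
    (hdiv : ∀ p : ℕ, p.Prime → p ∣ Nat.card Γ → p = 2 ∨ p = 3) :
    2 ∣ Nat.card Γ ∧ 3 ∣ Nat.card Γ := by
  constructor
  · by_contra h
    obtain ⟨c, hc⟩ := eq_three_pow_of_odd hdiv h
    have : Fact (Nat.Prime 3) := ⟨Nat.prime_three⟩
    exact hnil (IsPGroup.of_card hc).isNilpotent
  · by_contra h
    obtain ⟨c, hc⟩ := eq_two_pow_of_not_three_dvd Nat.card_pos.ne' hdiv h
    have : Fact (Nat.Prime 2) := ⟨Nat.prime_two⟩
    exact hnil (IsPGroup.of_card hc).isNilpotent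

theorem frobenius_two_three_complement_perfectOrderClasses_iff
    {G : Type*} [Group G] [Fintype G] (K H : Subgroup G)
    (hFrob : IsFrobeniusWith K H)
    (hnotnil : ¬ Group.IsNilpotent H)
    (hdiv : ∀ p : ℕ, p.Prime → p ∣ Nat.card H → p = 2 ∨ p = 3) :
    PerfectOrderClasses G ↔
      ∃ k : ℕ, 0 < k ∧
        (IsoFrobSdp G (Fin 2 → Multiplicative (ZMod (5 ^ k)))
            (Matrix.SpecialLinearGroup (Fin 2) (ZMod 3)) ∨
          IsoFrobSdp G (Fin 2 → Multiplicative (ZMod (5 ^ k))) (Metacyclic 3 8 (-1)) ∨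
          IsoFrobSdp G (Fin 2 → Multiplicative (ZMod (7 ^ k))) (Metacyclic 3 16 (-1)) ∨
          IsoFrobSdp G (Fin 2 → Multiplicative (ZMod (17 ^ k))) (Metacyclic 9 32 (-1))) := by
  constructor
  · intro hpoc
    obtain ⟨φ, hφ, ⟨e⟩⟩ := hFrob.exists_sdp
    have : Nontrivial K := (Subgroup.nontrivial_iff_ne_bot K).mpr hFrob.1
    obtain ⟨h2, h3⟩ := two_dvd_and_three_dvd_of_not_isNilpotent hnotnil hdiv
    obtain ⟨-, hcomm⟩ := hφ.exists_isUniqueInvolution h2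
    let _ : CommGroup K := { (inferInstance : Group K) with mul_comm := hcomm }
    obtain ⟨k, hk, hcases⟩ :=
      IsFixedPointFree.classification (φ := φ) hφ (hpoc.congr e) hnotnil hdiv h2 h3
    refine ⟨k, hk, ?_⟩
    rcases hcases with ⟨⟨eN⟩, (⟨⟨eC⟩⟩ | ⟨⟨eC⟩⟩)⟩ | ⟨⟨eN⟩, ⟨eC⟩⟩ | ⟨⟨eN⟩, ⟨eC⟩⟩
    · exact Or.inl (IsoFrobSdp.of_mulEquiv hφ e eN eC)
    · exact Or.inr (Or.inl (IsoFrobSdp.of_mulEquiv hφ e eN eC))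
    · exact Or.inr (Or.inr (Or.inl (IsoFrobSdp.of_mulEquiv hφ e eN eC)))
    · exact Or.inr (Or.inr (Or.inr (IsoFrobSdp.of_mulEquiv hφ e eN eC)))
  · rintro ⟨k, -, h | h | h | h⟩
    · exact h.perfectOrderClasses (by norm_num) SLTwoThree.perfectOrderClasses
        (by rw [SLTwoThree.card_eq]; norm_num)
    · exact IsoFrobSdp.perfectOrderClasses_of_metacyclic (m := 3) (l := 3) (by norm_num)
        (by decide) (by norm_num) (by norm_num) (by decide) h
    · exact IsoFrobSdp.perfectOrderClasses_of_metacyclic (m := 3) (l := 4) (by norm_num)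
        (by decide) (by norm_num) (by norm_num) (by decide) h
    · exact IsoFrobSdp.perfectOrderClasses_of_metacyclic (m := 9) (l := 5) (by norm_num)
        (by decide) (by norm_num) (by norm_num) (by decide +kernel) h
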